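/- Let n ≥ 2. Let B_n^B be the group presented by generators σ_0, σ_1, …, σ_{n−1} subject to: (BB1) σ_0σ_1σ_0σ_1 = σ_1σ_0σ_1σ_0; (BB2) σ_iσ_jσ_i = σ_jσ_iσ_j for i, j ≥ 1 with |i−j| = 1; (BB3) σ_iσ_j = σ_jσ_i for i, j ≥ 0 with |i−j| ≥ 2; and let π : B_n^B → Perm([±n]) be the group homomorphism with π(σ_0) = t_0 the transposition of −1 and 1, and π(σ_i) = t_i the permutation simultaneously swapping i with i+1 and −i with −(i+1) (these are permutations commuting with negation). Let TB be the monoid presented by generators s_i, s_i', θ_i (0 ≤ i ≤ n−1) subject to: (BB0) s_i s_i' = s_i' s_i = 1; (BB1)–(BB3) with σ replaced by s; (TB1) θ_i² = θ_i; (TB2) θ_i θ_j = θ_j θ_i; (TB3) θ_0 s_1 s_0 s_1 = s_1 s_0 s_1 θ_0 and θ_1 s_0 s_1 s_0 = s_0 s_1 s_0 θ_1; (TB4) s_i s_j θ_i = θ_j s_i s_j for i, j ≥ 1 with |i−j| = 1; (TB5) s_i θ_j = θ_j s_i for |i−j| ≠ 1; (TB6) θ_i θ_j s_i = θ_j s_i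 θ_j = s_i θ_i θ_j for i, j ≥ 0 with |i−j| = 1; (TB7) θ_1 s_0 θ_1 s_0 = s_0 θ_1 s_0 θ_1 and θ_0 s_1 θ_0 s_1 = s_1 θ_0 s_1 θ_0; (TB8) s_1 s_1 θ_0 = θ_0 s_1 s_1 and s_0 s_0 θ_1 = θ_1 s_0 s_0; (TB9) s_i s_j' θ_i = θ_j s_i s_j' for i, j ≥ 1 with |i−j| = 1. Then there is a bijection F : TB → P_n^B × B_n^B such that F(1) = (⊥, 1), F(s_i) = (⊥, σ_i), F(s_i') = (⊥, σ_i⁻¹), F(θ_0) = (ε_{−1,1}, 1), F(θ_i) = (ε_{i,i+1}, 1) for i ≥ 1, and F(x·y) = (F(x)₁ ·_B (π(F(x)₂) • F(y)₁), F(x)₂ · F(y)₂) for all x, y, where w • I is the transported partition (x ∼_{w•I} y iff w⁻¹x ∼_I w⁻¹y) and ·_B is the least-upper-bound product on P_n^B. -/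

import Mathlib

instance setoidCommMonoid (α : Type*) : CommMonoid (Setoid α) where
  mul := (· ⊔ ·)
  one := ⊥
  mul_assoc := sup_assoc
  one_mul := bot_sup_eq
  mul_one := sup_bot_eq
  mul_comm := sup_comm

def muSet {α : Type*} (X : Set α) : Setoid α :=
  Relation.EqvGen.setoid (fun x y => x ∈ X ∧ y ∈ X)

def mu {α : Type*} (i j : α) : Setoid α := muSet {i, j}

/-- `[±n]`: nonzero integers of absolute value at most `n`, with the order from `ℤ`. -/
abbrev PM (n : ℕ) := {k : ℤ // k ≠ 0 ∧ |k| ≤ (n : ℤ)}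

namespace PM

/-- The negation involution `k ↦ -k` on `[±n]`. -/
def neg {n : ℕ} (x : PM n) : PM n :=
  ⟨-x.1, by obtain ⟨h1, h2⟩ := x.2; exact ⟨neg_ne_zero.mpr h1, by rwa [abs_neg]⟩⟩

@[simp] theorem neg_neg {n : ℕ} (x : PM n) : x.neg.neg = x := Subtype.ext (by simp [neg])

theorem neg_lt_neg {n : ℕ} {x y : PM n} (h : x < y) : y.neg < x.neg := by
  have h' : x.1 < y.1 := Subtype.coe_lt_coe.mpr h
  rw [← Subtype.coe_lt_coe]
  show -y.1 < -x.1
  omega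

theorem neg_lt_pos {n : ℕ} {x y : PM n} (hx : 0 < x.1) (hy : 0 < y.1) : x.neg < y := by
  rw [← Subtype.coe_lt_coe]
  show -x.1 < y.1
  omega

theorem pos_ne_neg {n : ℕ} {x y : PM n} (hx : 0 < x.1) (hy : 0 < y.1) : y ≠ x.neg := by
  intro h
  have : y.1 = -x.1 := congrArg Subtype.val h
  omega

theorem neg_lt_self {n : ℕ} {x : PM n} (hx : 0 < x.1) : x.neg < x := neg_lt_pos hx hx

/-- The absolute value map `x ↦ |x|` from `[±n]` to its positive part. -/
def abs {n : ℕ} (x : PM n) : PM n :=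
  ⟨|x.1|, by obtain ⟨h1, h2⟩ := x.2; exact ⟨abs_ne_zero.mpr h1, by rwa [abs_abs]⟩⟩

end PM

/-- Image of a subset of `[±n]` under negation. -/
def negSet {n : ℕ} (K : Set (PM n)) : Set (PM n) := PM.neg '' K

/-- The partition `I⁻` transported along negation: `x ∼ y` in `negPart I` iff `-x ∼ -y` in `I`. -/
def negPart {n : ℕ} (I : Setoid (PM n)) : Setoid (PM n) := Setoid.comap PM.neg I

/-- A set partition `I` of `[±n]` is *signed* if for every block `K` of `I` the set `-K` is
also a block; equivalently, `x ∼ y ↔ -x ∼ -y` for all `x, y`. -/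
def IsSigned {n : ℕ} (I : Setoid (PM n)) : Prop :=
  ∀ x y : PM n, I x y ↔ I (PM.neg x) (PM.neg y)

/-- A *zero block* of a partition `I` is a block `K` with `-K = K`. -/
def IsZeroBlock {n : ℕ} (I : Setoid (PM n)) (K : Set (PM n)) : Prop :=
  K ∈ I.classes ∧ negSet K = K

/-- A `Bₙ`-partition: a signed partition of `[±n]` with at most one zero block. -/
def IsBPart {n : ℕ} (I : Setoid (PM n)) : Prop :=
  IsSigned I ∧ Set.Subsingleton {K | IsZeroBlock I K}

/-- A *restricted* signed partition: all its zero blocks have more than two elements. -/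
def IsRestricted {n : ℕ} (I : Setoid (PM n)) : Prop :=
  IsSigned I ∧ ∀ K : Set (PM n), IsZeroBlock I K → 2 < K.ncard

/-- A `Dₙ`-partition: a `Bₙ`-partition whose zero block (if present) has more than two
elements. -/
def IsDPart {n : ℕ} (I : Setoid (PM n)) : Prop :=
  IsBPart I ∧ ∀ K : Set (PM n), IsZeroBlock I K → 2 < K.ncard

/-- For `i < j` in `[±n]`, the signed partition `ε_{i,j} = μ_{-j,-i} ⊔ μ_{i,j}`. -/
def eps {n : ℕ} (i j : PM n) : Setoid (PM n) := mu (PM.neg j) (PM.neg i) ⊔ mu i j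

/-- Transport of a partition along a permutation: `x ∼ y` in `w • I` iff
`w⁻¹ x ∼ w⁻¹ y` in `I`. -/
def permAct {β : Type*} (w : Equiv.Perm β) (I : Setoid β) : Setoid β :=
  Setoid.comap w.symm I

/-- `|i - j| = 1` for indices. -/
def adjIdx {m : ℕ} (i j : Fin m) : Prop := i.1 + 1 = j.1 ∨ j.1 + 1 = i.1

/-- `|i - j| ≥ 2` for indices. -/
def farIdx {m : ℕ} (i j : Fin m) : Prop := i.1 + 2 ≤ j.1 ∨ j.1 + 2 ≤ i.1

theorem abs_le_coe {a : ℤ} {n : ℕ} (h0 : 0 ≤ a) (h : a ≤ (n : ℤ)) : |a| ≤ (n : ℤ) := by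
  rwa [abs_of_nonneg h0]

/-- The element `1` of `[±n]`. -/
def pmOne (n : ℕ) (hn : 2 ≤ n) : PM n :=
  ⟨1, one_ne_zero, abs_le_coe (by omega) (by omega)⟩

/-- The element `i` of `[±n]` attached to an index `i : Fin n` with `i ≥ 1`. -/
def pmA {n : ℕ} (i : Fin n) (h : 1 ≤ i.1) : PM n :=
  ⟨(i.1 : ℤ), by omega, abs_le_coe (by omega) (by have := i.isLt; omega)⟩

/-- The element `i + 1` of `[±n]` attached to an index `i : Fin n`. -/
def pmB {n : ℕ} (i : Fin n) : PM n :=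
  ⟨(i.1 : ℤ) + 1, by omega, abs_le_coe (by omega) (by have := i.isLt; omega)⟩

open FreeGroup in
/-- The relators of the Artin group `Bₙᴮ` of type B, with generators `σ₀, σ₁, …, σ_{n-1}`. -/
inductive BBRelator (n : ℕ) (hn : 2 ≤ n) : FreeGroup (Fin n) → Prop
  /-- (BB1) `σ₀σ₁σ₀σ₁ = σ₁σ₀σ₁σ₀`. -/
  | bb1 : BBRelator n hn
      (of ⟨0, by omega⟩ * of ⟨1, by omega⟩ * of ⟨0, by omega⟩ * of ⟨1, by omega⟩ *
        (of ⟨1, by omega⟩ * of ⟨0, by omega⟩ * of ⟨1, by omega⟩ * of ⟨0, by omega⟩)⁻¹)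
  /-- (BB2) `σᵢσⱼσᵢ = σⱼσᵢσⱼ` for `i, j ≥ 1` with `|i-j| = 1`. -/
  | bb2 (i j : Fin n) (hi : 1 ≤ i.1) (hj : 1 ≤ j.1) (h : adjIdx i j) :
      BBRelator n hn (of i * of j * of i * (of j * of i * of j)⁻¹)
  /-- (BB3) `σᵢσⱼ = σⱼσᵢ` for `|i-j| ≥ 2`. -/
  | bb3 (i j : Fin n) (h : farIdx i j) :
      BBRelator n hn (of i * of j * (of j * of i)⁻¹)

/-- The Artin (braid) group of type B. -/
abbrev BraidGroupB (n : ℕ) (hn : 2 ≤ n) := PresentedGroup {x | BBRelator n hn x}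

/-- Generators `s_i`, `s_i'` (formal inverses) and `θ_i`, `0 ≤ i ≤ n-1`, of the tied
monoid of type B. -/
inductive TBGen (n : ℕ) : Type
  | s (i : Fin n) : TBGen n
  | s' (i : Fin n) : TBGen n
  | θ (i : Fin n) : TBGen n

open FreeMonoid in
/-- The defining relations (BB0)–(BB3) and (TB1)–(TB9) of the tied monoid of type B. -/
inductive TBRel (n : ℕ) (hn : 2 ≤ n) : FreeMonoid (TBGen n) → FreeMonoid (TBGen n) → Prop
  /-- (BB0) `s_i s_i' = 1`. -/
  | BB0a (i : Fin n) : TBRel n hn (of (.s i) * of (.s' i)) 1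
  /-- (BB0) `s_i' s_i = 1`. -/
  | BB0b (i : Fin n) : TBRel n hn (of (.s' i) * of (.s i)) 1
  /-- (BB1) `s₀s₁s₀s₁ = s₁s₀s₁s₀`. -/
  | BB1 : TBRel n hn
      (of (.s ⟨0, by omega⟩) * of (.s ⟨1, by omega⟩) * of (.s ⟨0, by omega⟩) *
        of (.s ⟨1, by omega⟩))
      (of (.s ⟨1, by omega⟩) * of (.s ⟨0, by omega⟩) * of (.s ⟨1, by omega⟩) *
        of (.s ⟨0, by omega⟩))
  /-- (BB2) `sᵢsⱼsᵢ = sⱼsᵢsⱼ` for `i, j ≥ 1` with `|i-j| = 1`. -/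
  | BB2 (i j : Fin n) (hi : 1 ≤ i.1) (hj : 1 ≤ j.1) (h : adjIdx i j) :
      TBRel n hn (of (.s i) * of (.s j) * of (.s i)) (of (.s j) * of (.s i) * of (.s j))
  /-- (BB3) `sᵢsⱼ = sⱼsᵢ` for `|i-j| ≥ 2`. -/
  | BB3 (i j : Fin n) (h : farIdx i j) :
      TBRel n hn (of (.s i) * of (.s j)) (of (.s j) * of (.s i))
  /-- (TB1) `θᵢθᵢ = θᵢ`. -/
  | TB1 (i : Fin n) : TBRel n hn (of (.θ i) * of (.θ i)) (of (.θ i))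
  /-- (TB2) `θᵢθⱼ = θⱼθᵢ`. -/
  | TB2 (i j : Fin n) : TBRel n hn (of (.θ i) * of (.θ j)) (of (.θ j) * of (.θ i))
  /-- (TB3) `θ₀s₁s₀s₁ = s₁s₀s₁θ₀`. -/
  | TB3a : TBRel n hn
      (of (.θ ⟨0, by omega⟩) * of (.s ⟨1, by omega⟩) * of (.s ⟨0, by omega⟩) *
        of (.s ⟨1, by omega⟩))
      (of (.s ⟨1, by omega⟩) * of (.s ⟨0, by omega⟩) * of (.s ⟨1, by omega⟩) *
        of (.θ ⟨0, by omega⟩))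
  /-- (TB3) `θ₁s₀s₁s₀ = s₀s₁s₀θ₁`. -/
  | TB3b : TBRel n hn
      (of (.θ ⟨1, by omega⟩) * of (.s ⟨0, by omega⟩) * of (.s ⟨1, by omega⟩) *
        of (.s ⟨0, by omega⟩))
      (of (.s ⟨0, by omega⟩) * of (.s ⟨1, by omega⟩) * of (.s ⟨0, by omega⟩) *
        of (.θ ⟨1, by omega⟩))
  /-- (TB4) `sᵢsⱼθᵢ = θⱼsᵢsⱼ` for `i, j ≥ 1` with `|i-j| = 1`. -/
  | TB4 (i j : Fin n) (hi : 1 ≤ i.1) (hj : 1 ≤ j.1) (h : adjIdx i j) :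
      TBRel n hn (of (.s i) * of (.s j) * of (.θ i)) (of (.θ j) * of (.s i) * of (.s j))
  /-- (TB5) `sᵢθⱼ = θⱼsᵢ` for `|i-j| ≠ 1`. -/
  | TB5 (i j : Fin n) (h : ¬ adjIdx i j) :
      TBRel n hn (of (.s i) * of (.θ j)) (of (.θ j) * of (.s i))
  /-- (TB6) `θᵢθⱼsᵢ = θⱼsᵢθⱼ` for `|i-j| = 1`. -/
  | TB6a (i j : Fin n) (h : adjIdx i j) :
      TBRel n hn (of (.θ i) * of (.θ j) * of (.s i)) (of (.θ j) * of (.s i) * of (.θ j))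
  /-- (TB6) `θⱼsᵢθⱼ = sᵢθᵢθⱼ` for `|i-j| = 1`. -/
  | TB6b (i j : Fin n) (h : adjIdx i j) :
      TBRel n hn (of (.θ j) * of (.s i) * of (.θ j)) (of (.s i) * of (.θ i) * of (.θ j))
  /-- (TB7) `θ₁s₀θ₁s₀ = s₀θ₁s₀θ₁`. -/
  | TB7a : TBRel n hn
      (of (.θ ⟨1, by omega⟩) * of (.s ⟨0, by omega⟩) * of (.θ ⟨1, by omega⟩) *
        of (.s ⟨0, by omega⟩))
      (of (.s ⟨0, by omega⟩) * of (.θ ⟨1, by omega⟩) * of (.s ⟨0, by omega⟩) *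
        of (.θ ⟨1, by omega⟩))
  /-- (TB7) `θ₀s₁θ₀s₁ = s₁θ₀s₁θ₀`. -/
  | TB7b : TBRel n hn
      (of (.θ ⟨0, by omega⟩) * of (.s ⟨1, by omega⟩) * of (.θ ⟨0, by omega⟩) *
        of (.s ⟨1, by omega⟩))
      (of (.s ⟨1, by omega⟩) * of (.θ ⟨0, by omega⟩) * of (.s ⟨1, by omega⟩) *
        of (.θ ⟨0, by omega⟩))
  /-- (TB8) `s₁s₁θ₀ = θ₀s₁s₁`. -/
  | TB8a : TBRel n hn
      (of (.s ⟨1, by omega⟩) * of (.s ⟨1, by omega⟩) * of (.θ ⟨0, by omega⟩))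
      (of (.θ ⟨0, by omega⟩) * of (.s ⟨1, by omega⟩) * of (.s ⟨1, by omega⟩))
  /-- (TB8) `s₀s₀θ₁ = θ₁s₀s₀`. -/
  | TB8b : TBRel n hn
      (of (.s ⟨0, by omega⟩) * of (.s ⟨0, by omega⟩) * of (.θ ⟨1, by omega⟩))
      (of (.θ ⟨1, by omega⟩) * of (.s ⟨0, by omega⟩) * of (.s ⟨0, by omega⟩))
  /-- (TB9) `sᵢsⱼ'θᵢ = θⱼsᵢsⱼ'` for `i, j ≥ 1` with `|i-j| = 1`. -/
  | TB9 (i j : Fin n) (hi : 1 ≤ i.1) (hj : 1 ≤ j.1) (h : adjIdx i j) :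
      TBRel n hn (of (.s i) * of (.s' j) * of (.θ i)) (of (.θ j) * of (.s i) * of (.s' j))

/-! The Artin group acts on the tied monoid by conjugation, and (TB1)–(TB9) make the `θ_k` part of
a family of commuting idempotent ties `e x y`, indexed by pairs of elements of `[±n]`, which the
action permutes through `π`. Up to signed permutation, a relation between two ties involves only
the points `1, 2, 3, 4` and their negatives, where it can be checked by hand. In this way one
finds that `e x y * e y z = e y z * e x z` and `e x y * e (-x) x = e (-x) x * e (-y) y`, so that,
for any element `b`, the pairs `(x, y)` with `b * e x y = b` form a `B_n`-partition. Hence sending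
`I` to the product of the `e x y` with `x ∼_I y` is multiplicative. Together with `σ_i ↦ s_i` this
gives an inverse of the map from the tied monoid to the semidirect product. -/

/-! ### Partitions of type B -/

theorem PM.coe_neg {n : ℕ} (x : PM n) : (x.neg : ℤ) = -x := rfl

theorem isZeroBlock_iff {n : ℕ} {I : Setoid (PM n)} (hI : IsSigned I) (K : Set (PM n)) :
    IsZeroBlock I K ↔ ∃ x, I x x.neg ∧ {z | I z x} = K := by
  constructor
  · rintro ⟨⟨x, rfl⟩, hK⟩
    have hx : x.neg ∈ {z | I z x} := hK ▸ ⟨x, I.refl x, rfl⟩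
    exact ⟨x, I.symm hx, rfl⟩
  · rintro ⟨x, hx, rfl⟩
    refine ⟨⟨x, rfl⟩, Set.ext fun z => ⟨?_, fun hz => ⟨z.neg, ?_, z.neg_neg⟩⟩⟩
    · rintro ⟨y, hy, rfl⟩
      exact I.trans ((hI _ _).1 hy) (I.symm hx)
    · exact I.trans ((hI _ _).1 hz) (I.symm hx)

theorem isBPart_iff {n : ℕ} (I : Setoid (PM n)) :
    IsBPart I ↔ IsSigned I ∧ ∀ x y : PM n, I x x.neg → I y y.neg → I x y := by
  refine and_congr_right fun hI => ⟨fun h x y hx hy => ?_, fun h K hK L hL => ?_⟩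
  · have hxy : {z | I z x} = {z | I z y} :=
      h ((isZeroBlock_iff hI _).2 ⟨x, hx, rfl⟩) ((isZeroBlock_iff hI _).2 ⟨y, hy, rfl⟩)
    exact (Set.ext_iff.1 hxy x).1 (I.refl x)
  · obtain ⟨x, hx, rfl⟩ := (isZeroBlock_iff hI K).1 hK
    obtain ⟨y, hy, rfl⟩ := (isZeroBlock_iff hI L).1 hL
    exact Set.ext fun z =>
      ⟨fun hz => I.trans hz (h x y hx hy), fun hz => I.trans hz (h y x hy hx)⟩

theorem isBPart_ker {n : ℕ} {f : PM n → ℤ} (hf : ∀ x, f x.neg = -f x) :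
    IsBPart (Setoid.ker f) := by
  refine (isBPart_iff _).2 ⟨fun x y => ?_, fun x y hx hy => ?_⟩
  · simp only [Setoid.ker_def, hf, neg_inj]
  · simp only [Setoid.ker_def, hf] at hx hy ⊢
    omega

/-- The set `P_n^B` of `B_n`-partitions of `[±n]`, ordered by refinement. -/
def BPartition (n : ℕ) := {I : Setoid (PM n) // IsBPart I}

namespace BPartition

variable {n : ℕ}

instance : PartialOrder (BPartition n) :=
  inferInstanceAs (PartialOrder {I : Setoid (PM n) // IsBPart I})

theorem rel_neg_iff (I : BPartition n) {x y : PM n} : I.1 x.neg y.neg ↔ I.1 x y :=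
  (((isBPart_iff I.1).1 I.2).1 x y).symm

theorem rel_of_rel_neg (I : BPartition n) {x y : PM n} (hx : I.1 x x.neg) (hy : I.1 y y.neg) :
    I.1 x y :=
  ((isBPart_iff I.1).1 I.2).2 x y hx hy

instance : InfSet (BPartition n) where
  sInf S := ⟨sInf (Subtype.val '' S), (isBPart_iff _).2
    ⟨fun _ _ => ⟨fun h => Set.forall_mem_image.2 fun (I : BPartition n) hI =>
          I.rel_neg_iff.2 (h _ (Set.mem_image_of_mem _ hI)),
        fun h => Set.forall_mem_image.2 fun (I : BPartition n) hI =>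
          I.rel_neg_iff.1 (h _ (Set.mem_image_of_mem _ hI))⟩,
      fun _ _ hx hy => Set.forall_mem_image.2 fun (I : BPartition n) hI =>
        I.rel_of_rel_neg (hx _ (Set.mem_image_of_mem _ hI))
          (hy _ (Set.mem_image_of_mem _ hI))⟩⟩

noncomputable instance : CompleteLattice (BPartition n) :=
  completeLatticeOfInf _ fun _ =>
    ⟨fun I hI => sInf_le (α := Setoid (PM n)) ⟨I, hI, rfl⟩,
      fun _ hI => le_sInf (α := Setoid (PM n)) (Set.forall_mem_image.2 hI)⟩

noncomputable instance : CommMonoid (BPartition n) where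
  mul := (· ⊔ ·)
  one := ⊥
  mul_assoc := sup_assoc
  one_mul := bot_sup_eq
  mul_one := sup_bot_eq
  mul_comm := sup_comm

theorem mul_eq_sup (I J : BPartition n) : I * J = I ⊔ J := rfl

theorem one_eq_bot : (1 : BPartition n) = ⊥ := rfl

theorem coe_bot : (⊥ : BPartition n).1 = ⊥ := by
  have h : IsBPart (⊥ : Setoid (PM n)) := by
    rw [← Setoid.ker_eq_bot_iff.2
      (Subtype.val_injective (p := fun k : ℤ => k ≠ 0 ∧ |k| ≤ (n : ℤ)))]
    exact isBPart_ker PM.coe_neg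
  exact le_bot_iff.1 (show (⊥ : BPartition n) ≤ ⟨⊥, h⟩ from bot_le)

/-- The least `B_n`-partition with `x` and `y` in one block; these are the generators of the
monoid of `B_n`-partitions, and `join x y` is `ε_{x,y}` when `x ≠ y`. -/
noncomputable def join (x y : PM n) : BPartition n := sInf {I | I.1 x y}

theorem join_le_iff {x y : PM n} {I : BPartition n} : join x y ≤ I ↔ I.1 x y :=
  ⟨fun h => h (Set.forall_mem_image.2 fun _ hJ => hJ), fun h => sInf_le h⟩

theorem rel_join (x y : PM n) : (join x y).1 x y := join_le_iff.1 le_rfl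

theorem join_comm (x y : PM n) : join x y = join y x :=
  eq_of_forall_ge_iff fun I => by simp only [join_le_iff, I.1.comm']

theorem join_neg (x y : PM n) : join x.neg y.neg = join x y :=
  eq_of_forall_ge_iff fun I => by simp only [join_le_iff, I.rel_neg_iff]

theorem join_self (x : PM n) : join x x = ⊥ :=
  le_bot_iff.1 (join_le_iff.2 (Setoid.refl' _ _))

theorem join_sup_join (x y z : PM n) : join x y ⊔ join y z = join y z ⊔ join x z :=
  eq_of_forall_ge_iff fun I => by
    simp only [sup_le_iff, join_le_iff]
    exact ⟨fun h => ⟨h.2, I.1.trans h.1 h.2⟩, fun h => ⟨I.1.trans h.2 (I.1.symm h.1), h.1⟩⟩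

theorem join_sup_join_neg (x y : PM n) :
    join x y ⊔ join x.neg x = join x.neg x ⊔ join y.neg y :=
  eq_of_forall_ge_iff fun I => by
    simp only [sup_le_iff, join_le_iff]
    refine ⟨fun ⟨hxy, hx⟩ => ⟨hx, ?_⟩,
      fun ⟨hx, hy⟩ => ⟨I.rel_of_rel_neg (I.1.symm hx) (I.1.symm hy), hx⟩⟩
    exact I.1.trans (I.1.trans (I.rel_neg_iff.2 (I.1.symm hxy)) hx) hxy

end BPartition

theorem mu_le_iff {α : Type*} {a b : α} {K : Setoid α} : mu a b ≤ K ↔ K a b := by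
  refine ⟨fun h => h (Relation.EqvGen.rel a b ⟨by simp, by simp⟩), fun h => Setoid.eqvGen_le ?_⟩
  rintro x y ⟨rfl | rfl, rfl | rfl⟩
  exacts [K.refl _, h, K.symm h, K.refl _]

theorem eps_le_iff {n : ℕ} {a b : PM n} {K : Setoid (PM n)} :
    eps a b ≤ K ↔ K a b ∧ K a.neg b.neg := by
  rw [eps, sup_le_iff, mu_le_iff, mu_le_iff, and_comm, K.comm' (x := b.neg)]

theorem eps_neg_eq_ker {n : ℕ} (a : PM n) :
    eps a a.neg = Setoid.ker fun x : PM n => if x = a ∨ x = a.neg then 0 else (x : ℤ) := by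
  have ha : eps a a.neg a a.neg := (eps_le_iff.1 le_rfl).1
  refine le_antisymm (eps_le_iff.2 (by simp [Setoid.ker_def])) fun x y hxy => ?_
  rw [Setoid.ker_def] at hxy
  split_ifs at hxy with hx hy hy
  · rcases hx with rfl | rfl <;> rcases hy with rfl | rfl
    exacts [Setoid.refl' _ _, ha, Setoid.symm' _ ha, Setoid.refl' _ _]
  · exact absurd hxy.symm y.2.1
  · exact absurd hxy x.2.1
  · rw [Subtype.ext hxy]

theorem eps_eq_ker {n : ℕ} {a b : PM n} (hab : b ≠ a) (hab' : b ≠ a.neg) :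
    eps a b = Setoid.ker fun x : PM n =>
      ((if x = b then a else if x = b.neg then a.neg else x : PM n) : ℤ) := by
  obtain ⟨h, hneg⟩ := eps_le_iff.1 (le_refl (eps a b))
  have hrep : ∀ x, eps a b x (if x = b then a else if x = b.neg then a.neg else x) := by
    intro x
    split_ifs with hx hx'
    · exact hx.symm ▸ Setoid.symm' _ h
    · exact hx'.symm ▸ Setoid.symm' _ hneg
    · exact Setoid.refl' _ x
  refine le_antisymm (eps_le_iff.2 ?_) fun x y hxy => ?_
  · have := a.2.1
    simp only [Setoid.ker_def, ne_eq, Subtype.ext_iff, PM.coe_neg,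
      apply_ite Subtype.val] at hab hab' ⊢
    constructor <;> split_ifs <;> omega
  · have hy := hrep y
    rw [← Subtype.ext (Setoid.ker_def.1 hxy)] at hy
    exact Setoid.trans' _ (hrep x) (Setoid.symm' _ hy)

theorem isBPart_eps {n : ℕ} {a b : PM n} (hab : a ≠ b) : IsBPart (eps a b) := by
  by_cases hb : b = a.neg
  · subst hb
    rw [eps_neg_eq_ker]
    refine isBPart_ker fun x => ?_
    simp only [Subtype.ext_iff, PM.coe_neg]
    split_ifs <;> omega
  · rw [eps_eq_ker hab.symm hb]
    refine isBPart_ker fun x => ?_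
    have := x.2.1
    simp only [Subtype.ext_iff, PM.coe_neg, apply_ite Subtype.val]
    split_ifs <;> omega

theorem BPartition.coe_join {n : ℕ} {x y : PM n} (hxy : x ≠ y) : (join x y).1 = eps x y :=
  le_antisymm
    (join_le_iff.2 (eps_le_iff.1 le_rfl).1 : join x y ≤ ⟨eps x y, isBPart_eps hxy⟩)
    (eps_le_iff.2 ⟨rel_join x y, (join x y).rel_neg_iff.2 (rel_join x y)⟩)

/-! ### Semidirect products and the braid action -/

/-- The semidirect product `M ⋊ G` of a monoid `M` by a monoid `G` acting on it by endomorphisms,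
with `(m, g) * (m', g') = (m * g • m', g * g')`; `SemidirectProduct` needs two groups. -/
@[ext]
structure MonoidSemidirect (M G : Type*) where
  left : M
  right : G

namespace MonoidSemidirect

variable {M G N : Type*} [Monoid M] [Monoid G] [MulDistribMulAction G M] [Monoid N]

instance : Monoid (MonoidSemidirect M G) where
  mul x y := ⟨x.left * x.right • y.left, x.right * y.right⟩
  one := ⟨1, 1⟩
  mul_assoc x y z := MonoidSemidirect.ext
    (show x.left * x.right • y.left * (x.right * y.right) • z.left =
        x.left * x.right • (y.left * y.right • z.left) by rw [smul_mul', mul_smul, mul_assoc])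
    (mul_assoc x.right y.right z.right)
  one_mul x := MonoidSemidirect.ext
    (show 1 * (1 : G) • x.left = x.left by rw [one_smul, one_mul]) (one_mul x.right)
  mul_one x := MonoidSemidirect.ext
    (show x.left * x.right • 1 = x.left by rw [smul_one, mul_one]) (mul_one x.right)

theorem mul_left (x y : MonoidSemidirect M G) : (x * y).left = x.left * x.right • y.left := rfl

theorem mul_right (x y : MonoidSemidirect M G) : (x * y).right = x.right * y.right := rfl

theorem one_left : (1 : MonoidSemidirect M G).left = 1 := rfl

theorem one_right : (1 : MonoidSemidirect M G).right = 1 := rfl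

/-- The embedding `m ↦ (m, 1)`. -/
def inl : M →* MonoidSemidirect M G where
  toFun m := ⟨m, 1⟩
  map_one' := rfl
  map_mul' m m' := MonoidSemidirect.ext
    (show m * m' = m * (1 : G) • m' by rw [one_smul]) (one_mul 1).symm

/-- The embedding `g ↦ (1, g)`. -/
def inr : G →* MonoidSemidirect M G where
  toFun g := ⟨1, g⟩
  map_one' := rfl
  map_mul' g g' := MonoidSemidirect.ext (show 1 = 1 * g • (1 : M) by rw [smul_one, one_mul]) rfl

theorem inl_left (m : M) : (inl m : MonoidSemidirect M G).left = m := rfl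

theorem inl_right (m : M) : (inl m : MonoidSemidirect M G).right = 1 := rfl

theorem inr_left (g : G) : (inr g : MonoidSemidirect M G).left = 1 := rfl

theorem inr_right (g : G) : (inr g : MonoidSemidirect M G).right = g := rfl

theorem inl_mul_inr (m : M) (g : G) : inl m * inr g = (⟨m, g⟩ : MonoidSemidirect M G) :=
  MonoidSemidirect.ext (show m * (1 : G) • 1 = m by rw [smul_one, mul_one]) (one_mul g)

theorem inr_mul_inl (g : G) (m : M) :
    inr g * inl m = (inl (g • m) * inr g : MonoidSemidirect M G) := by
  rw [inl_mul_inr]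
  exact MonoidSemidirect.ext (one_mul (g • m)) (mul_one g)

/-- The universal property of `M ⋊ G`. -/
def lift (f : M →* N) (u : G →* N) (h : ∀ g m, u g * f m = f (g • m) * u g) :
    MonoidSemidirect M G →* N where
  toFun x := f x.left * u x.right
  map_one' := by rw [one_left, one_right, map_one, map_one, one_mul]
  map_mul' x y := by
    rw [mul_left, mul_right, map_mul, map_mul, mul_assoc, mul_assoc,
      ← mul_assoc (f (x.right • y.left)), ← h, mul_assoc]

section lift

variable (f : M →* N) (u : G →* N) (h : ∀ g m, u g * f m = f (g • m) * u g)

theorem lift_inl (m : M) : lift f u h (inl m) = f m :=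
  (congrArg (f m * ·) (map_one u)).trans (mul_one (f m))

theorem lift_inr (g : G) : lift f u h (inr g) = u g :=
  (congrArg (· * u g) (map_one f)).trans (one_mul (u g))

end lift

theorem hom_ext {f g : MonoidSemidirect M G →* N} (hl : f.comp inl = g.comp inl)
    (hr : f.comp inr = g.comp inr) : f = g :=
  MonoidHom.ext fun x => by
    rw [← show inl x.left * inr x.right = x from inl_mul_inr _ _, map_mul, map_mul]
    exact congr_arg₂ (· * ·) (DFunLike.congr_fun hl x.left) (DFunLike.congr_fun hr x.right)

end MonoidSemidirect

/-- The signed permutations of `[±n]`: those commuting with negation. -/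
def SignedPerm (n : ℕ) : Subgroup (Equiv.Perm (PM n)) where
  carrier := {w | ∀ x : PM n, w x.neg = (w x).neg}
  mul_mem' ha hb x := by rw [Equiv.Perm.mul_apply, hb x, ha, Equiv.Perm.mul_apply]
  one_mem' _ := rfl
  inv_mem' {w} hw x := by
    rw [Equiv.Perm.inv_eq_iff_eq, hw, ← Equiv.Perm.mul_apply, mul_inv_cancel,
      Equiv.Perm.one_apply]

namespace SignedPerm

variable {n : ℕ}

theorem smul_neg (w : SignedPerm n) (x : PM n) : w • x.neg = (w • x).neg := w.2 x

instance : MulAction (SignedPerm n) (BPartition n) where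
  smul w I := ⟨permAct w.1 I.1, (isBPart_iff _).2
    ⟨fun x y => show I.1 (w⁻¹ • x) (w⁻¹ • y) ↔ I.1 (w⁻¹ • x.neg) (w⁻¹ • y.neg) by
        rw [smul_neg, smul_neg, I.rel_neg_iff],
      fun x y (hx : I.1 (w⁻¹ • x) (w⁻¹ • x.neg)) (hy : I.1 (w⁻¹ • y) (w⁻¹ • y.neg)) =>
        I.rel_of_rel_neg (smul_neg w⁻¹ x ▸ hx) (smul_neg w⁻¹ y ▸ hy)⟩⟩
  one_smul _ := rfl
  mul_smul _ _ _ := rfl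

theorem smul_rel {w : SignedPerm n} {I : BPartition n} {x y : PM n} :
    (w • I).1 x y ↔ I.1 (w⁻¹ • x) (w⁻¹ • y) := Iff.rfl

theorem smul_le_iff {w : SignedPerm n} {I J : BPartition n} : w • I ≤ J ↔ I ≤ w⁻¹ • J := by
  have mono : ∀ (v : SignedPerm n) {I J : BPartition n}, I ≤ J → v • I ≤ v • J :=
    fun v I J h x y hxy => h hxy
  exact ⟨fun h => inv_smul_smul w I ▸ mono w⁻¹ h, fun h => smul_inv_smul w J ▸ mono w h⟩

instance : MulDistribMulAction (SignedPerm n) (BPartition n) where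
  smul_mul w I J := eq_of_forall_ge_iff fun K => by
    simp only [BPartition.mul_eq_sup, sup_le_iff, smul_le_iff]
  smul_one _ := le_bot_iff.1 (smul_le_iff.2 bot_le)

theorem smul_join (w : SignedPerm n) (x y : PM n) :
    w • BPartition.join x y = BPartition.join (w • x) (w • y) :=
  eq_of_forall_ge_iff fun K => by
    rw [smul_le_iff, BPartition.join_le_iff, BPartition.join_le_iff, smul_rel, inv_inv]

end SignedPerm

/-- The simple reflections of type `B`, as maps on `ℤ`: `0` swaps `±1`, and `k ≥ 1` swaps `k` with
`k + 1` and `-k` with `-(k + 1)`. -/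
def simpleReflection (k : ℕ) (a : ℤ) : ℤ :=
  if k = 0 then (if a = 1 then -1 else if a = -1 then 1 else a)
  else if a = k then k + 1 else if a = k + 1 then k
  else if a = -k then -(k + 1) else if a = -(k + 1) then -k else a

-- A disjunctive normal form of the definition, in which `omega` can compute.
theorem simpleReflection_cases (k : ℕ) (a : ℤ) :
    (k = 0 ∧ a = 1 ∧ simpleReflection k a = -1) ∨ (k = 0 ∧ a = -1 ∧ simpleReflection k a = 1) ∨
    (k = 0 ∧ a ≠ 1 ∧ a ≠ -1 ∧ simpleReflection k a = a) ∨
    (k ≠ 0 ∧ a = k ∧ simpleReflection k a = k + 1) ∨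
    (k ≠ 0 ∧ a = k + 1 ∧ simpleReflection k a = k) ∨
    (k ≠ 0 ∧ a = -k ∧ simpleReflection k a = -(k + 1)) ∨
    (k ≠ 0 ∧ a = -(k + 1) ∧ simpleReflection k a = -k) ∨
    (k ≠ 0 ∧ a ≠ k ∧ a ≠ k + 1 ∧ a ≠ -k ∧ a ≠ -(k + 1) ∧ simpleReflection k a = a) := by
  unfold simpleReflection
  split_ifs <;> omega

theorem simpleReflection_involutive (k : ℕ) : Function.Involutive (simpleReflection k) := by
  intro a
  have h₁ := simpleReflection_cases k a
  have h₂ := simpleReflection_cases k (simpleReflection k a)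
  omega

theorem simpleReflection_neg (k : ℕ) (a : ℤ) :
    simpleReflection k (-a) = -simpleReflection k a := by
  have h₁ := simpleReflection_cases k a
  have h₂ := simpleReflection_cases k (-a)
  omega

theorem simpleReflection_mem {n k : ℕ} (hk : k < n) (x : PM n) :
    simpleReflection k x ≠ 0 ∧ |simpleReflection k x| ≤ (n : ℤ) := by
  have hx := x.2
  have h := simpleReflection_cases k x
  rw [abs_le] at hx ⊢
  omega

/-- The image of the generator `σ_i` of the Artin group among the signed permutations. -/
def simpleSignedPerm {n : ℕ} (i : Fin n) : SignedPerm n :=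
  ⟨Function.Involutive.toPerm (fun x => ⟨simpleReflection i x, simpleReflection_mem i.2 x⟩)
      fun x => Subtype.ext (simpleReflection_involutive i x),
    fun x => Subtype.ext (simpleReflection_neg i x)⟩

theorem coe_simpleSignedPerm_smul {n : ℕ} (i : Fin n) (x : PM n) :
    ((simpleSignedPerm i • x : PM n) : ℤ) = simpleReflection i x := rfl

theorem SignedPerm.ext_smul {n : ℕ} {v w : SignedPerm n}
    (h : ∀ x : PM n, ((v • x : PM n) : ℤ) = (w • x : PM n)) : v = w :=
  Subtype.ext (Equiv.ext fun x => Subtype.ext (h x))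

theorem simpleReflection_braid_four (a : ℤ) :
    simpleReflection 0 (simpleReflection 1 (simpleReflection 0 (simpleReflection 1 a))) =
      simpleReflection 1 (simpleReflection 0 (simpleReflection 1 (simpleReflection 0 a))) := by
  by_cases h : a = 1 ∨ a = -1 ∨ a = 2 ∨ a = -2
  · rcases h with rfl | rfl | rfl | rfl <;> decide
  · have h₀ : simpleReflection 0 a = a := by have := simpleReflection_cases 0 a; omega
    have h₁ : simpleReflection 1 a = a := by have := simpleReflection_cases 1 a; omega
    simp only [h₀, h₁]

theorem simpleReflection_braid {k : ℕ} (hk : 1 ≤ k) (a : ℤ) :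
    simpleReflection k (simpleReflection (k + 1) (simpleReflection k a)) =
      simpleReflection (k + 1) (simpleReflection k (simpleReflection (k + 1) a)) := by
  wlog ha : 0 ≤ a generalizing a
  · have hneg := this (-a) (by omega)
    simpa only [simpleReflection_neg, neg_inj] using hneg
  have cases_of_nonneg : ∀ {j : ℕ} {b : ℤ}, 1 ≤ j → 0 ≤ b →
      (b = j ∧ simpleReflection j b = j + 1) ∨ (b = j + 1 ∧ simpleReflection j b = j) ∨
      (b ≠ j ∧ b ≠ j + 1 ∧ simpleReflection j b = b) := by
    intro j b hj hb
    have := simpleReflection_cases j b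
    omega
  have h₁ := cases_of_nonneg hk ha
  have h₂ := cases_of_nonneg (Nat.le_add_left 1 k) ha
  have h₃ := cases_of_nonneg (b := simpleReflection k a) (Nat.le_add_left 1 k) (by omega)
  have h₄ := cases_of_nonneg (b := simpleReflection (k + 1) a) hk (by omega)
  have h₅ := cases_of_nonneg (b := simpleReflection (k + 1) (simpleReflection k a)) hk (by omega)
  have h₆ := cases_of_nonneg (b := simpleReflection k (simpleReflection (k + 1) a))
    (Nat.le_add_left 1 k) (by omega)
  omega

theorem simpleReflection_comm {j k : ℕ} (h : j + 2 ≤ k ∨ k + 2 ≤ j) (a : ℤ) :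
    simpleReflection j (simpleReflection k a) = simpleReflection k (simpleReflection j a) := by
  have hj := simpleReflection_cases j a
  have hk := simpleReflection_cases k a
  obtain hfix | hfix : simpleReflection j a = a ∨ simpleReflection k a = a := by omega
  · have := simpleReflection_cases j (simpleReflection k a)
    rw [hfix]
    omega
  · have := simpleReflection_cases k (simpleReflection j a)
    rw [hfix]
    omega

section BraidAction

variable {n : ℕ} (hn : 2 ≤ n)

/-- The signed permutation underlying a type `B` braid. -/
def toSignedPerm : BraidGroupB n hn →* SignedPerm n :=
  PresentedGroup.toGroup (f := simpleSignedPerm) <| by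
    rintro _ (_ | ⟨i, j, hi, hj, h⟩ | ⟨i, j, h⟩) <;>
      simp only [map_mul, map_inv, FreeGroup.lift_apply_of] <;> rw [mul_inv_eq_one]
    · exact SignedPerm.ext_smul fun x => simpleReflection_braid_four x
    · refine SignedPerm.ext_smul fun x => ?_
      simp only [mul_smul, coe_simpleSignedPerm_smul]
      rcases h with h | h <;> rw [← h]
      exacts [simpleReflection_braid hi x, (simpleReflection_braid hj x).symm]
    · exact SignedPerm.ext_smul fun x => simpleReflection_comm h x

noncomputable instance : MulAction (BraidGroupB n hn) (PM n) :=
  MulAction.compHom _ (toSignedPerm hn)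

noncomputable instance : MulDistribMulAction (BraidGroupB n hn) (BPartition n) :=
  MulDistribMulAction.compHom _ (toSignedPerm hn)

variable {hn}

theorem coe_of_smul (i : Fin n) (x : PM n) :
    (((PresentedGroup.of i : BraidGroupB n hn) • x : PM n) : ℤ) = simpleReflection i x := by
  change (((toSignedPerm hn (PresentedGroup.of i)) • x : PM n) : ℤ) = _
  rw [toSignedPerm, PresentedGroup.toGroup.of, coe_simpleSignedPerm_smul]

theorem braid_smul_neg (g : BraidGroupB n hn) (x : PM n) : g • x.neg = (g • x).neg :=
  SignedPerm.smul_neg (toSignedPerm hn g) x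

theorem braid_smul_join (g : BraidGroupB n hn) (x y : PM n) :
    g • BPartition.join x y = BPartition.join (g • x) (g • y) :=
  SignedPerm.smul_join (toSignedPerm hn g) x y

theorem coe_braid_smul (π : BraidGroupB n hn →* Equiv.Perm (PM n))
    (hπ0 : π (PresentedGroup.of ⟨0, by omega⟩) =
      Equiv.swap (PM.neg (pmOne n hn)) (pmOne n hn))
    (hπ : ∀ i : Fin n, ∀ hi : 1 ≤ i.1, π (PresentedGroup.of i) =
      Equiv.swap (pmA i hi) (pmB i) * Equiv.swap (PM.neg (pmA i hi)) (PM.neg (pmB i)))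
    (g : BraidGroupB n hn) (I : BPartition n) : (g • I).1 = permAct (π g) I.1 := by
  have coe_swap : ∀ x y z : PM n, ((Equiv.swap x y z : PM n) : ℤ) =
      if (z : ℤ) = x then (y : ℤ) else if (z : ℤ) = y then (x : ℤ) else z := by
    intro x y z
    simp only [Equiv.swap_apply_def, Subtype.ext_iff, apply_ite Subtype.val]
  have hπ_eq : π = (SignedPerm n).subtype.comp (toSignedPerm hn) := by
    refine PresentedGroup.ext fun i => Equiv.ext fun x => Subtype.ext ?_
    refine Eq.trans ?_ (coe_of_smul (hn := hn) i x).symm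
    rcases i with ⟨_ | k, hk⟩
    · rw [hπ0, coe_swap]
      simp only [PM.coe_neg, pmOne, simpleReflection]
      split_ifs <;> omega
    · rw [hπ _ (Nat.le_add_left 1 k), Equiv.Perm.mul_apply, coe_swap, coe_swap]
      simp only [PM.coe_neg, pmA, pmB]
      have := simpleReflection_cases (k + 1) x
      grind
  rw [hπ_eq]
  rfl

end BraidAction

section Transitivity

variable {n : ℕ} {hn : 2 ≤ n}

theorem natAbs_braid_smul_eq_iff (g : BraidGroupB n hn) (x y : PM n) :
    ((g • x : PM n) : ℤ).natAbs = ((g • y : PM n) : ℤ).natAbs ↔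
      (x : ℤ).natAbs = (y : ℤ).natAbs := by
  simp only [Int.natAbs_eq_natAbs_iff, ← PM.coe_neg, ← Subtype.ext_iff, ← braid_smul_neg,
    smul_left_cancel_iff]

theorem exists_smul_eq_flip {i : ℕ} (hi : 1 ≤ i) (hin : i ≤ n) :
    ∃ g : BraidGroupB n hn, ∀ x : PM n,
      ((g • x : PM n) : ℤ) = if (x : ℤ).natAbs = i then -(x : ℤ) else x := by
  induction i, hi using Nat.le_induction with
  | base =>
    refine ⟨PresentedGroup.of ⟨0, by omega⟩, fun x => (coe_of_smul _ x).trans ?_⟩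
    change simpleReflection 0 x = _
    have := simpleReflection_cases 0 x
    split_ifs <;> omega
  | succ i hi ih =>
    obtain ⟨g, hg⟩ := ih (by omega)
    refine ⟨PresentedGroup.of ⟨i, hin⟩ * g * PresentedGroup.of ⟨i, hin⟩, fun x => ?_⟩
    simp only [mul_smul, coe_of_smul, hg]
    have h₁ := simpleReflection_cases i x
    have h₂ := simpleReflection_neg i (simpleReflection i x)
    have h₃ := simpleReflection_involutive i x
    split_ifs <;> omega

theorem exists_smul_eq_succ {m : ℕ} (x : PM n) (hx : m < (x : ℤ).natAbs) :
    ∃ g : BraidGroupB n hn, ((g • x : PM n) : ℤ) = m + 1 ∧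
      ∀ z : PM n, (z : ℤ).natAbs ≤ m → g • z = z := by
  obtain ⟨d, hd⟩ := Nat.exists_eq_add_of_lt hx
  have hxn := x.2.2
  rw [abs_le] at hxn
  induction d generalizing x with
  | zero =>
    obtain hpos | hneg : (x : ℤ) = m + 1 ∨ (x : ℤ) = -(m + 1) := by omega
    · exact ⟨1, by rw [one_smul, hpos], fun z _ => one_smul _ z⟩
    · obtain ⟨g, hg⟩ := exists_smul_eq_flip (hn := hn) (i := m + 1) (by omega) (by omega)
      refine ⟨g, ?_, fun z hz => Subtype.ext ?_⟩ <;> rw [hg] <;> split_ifs <;> omega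
  | succ d ih =>
    let σ : BraidGroupB n hn := PresentedGroup.of ⟨m + d + 1, by omega⟩
    have hσ : ∀ z : PM n, ((σ • z : PM n) : ℤ) = simpleReflection (m + d + 1) z := coe_of_smul _
    have hσx := simpleReflection_cases (m + d + 1) x
    rw [← hσ] at hσx
    obtain ⟨g, hgx, hg⟩ := ih (σ • x) (by omega) (by omega) (by omega)
    refine ⟨g * σ, by rw [mul_smul, hgx], fun z hz => ?_⟩
    have hσz : σ • z = z := Subtype.ext <| by
      have := simpleReflection_cases (m + d + 1) z
      rw [hσ]
      omega
    rw [mul_smul, hσz, hg z hz]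

theorem exists_smul_eq_coe {m : ℕ} (f : Fin m → PM n)
    (hf : Function.Injective fun i => (f i : ℤ).natAbs) :
    m ≤ n ∧ ∃ g : BraidGroupB n hn, ∀ i, ((g • f i : PM n) : ℤ) = i + 1 := by
  induction m with
  | zero => exact ⟨Nat.zero_le n, 1, fun i => i.elim0⟩
  | succ m ih =>
    obtain ⟨-, g, hg⟩ := ih (f ∘ Fin.castSucc) (hf.comp (Fin.castSucc_injective m))
    simp only [Function.comp_apply] at hg
    have hlast : m < ((g • f (Fin.last m) : PM n) : ℤ).natAbs := by
      by_contra! hle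
      have hne := (g • f (Fin.last m)).2.1
      obtain ⟨i, hi⟩ : ∃ i : Fin m, ((g • f (Fin.last m) : PM n) : ℤ).natAbs = i + 1 :=
        ⟨⟨((g • f (Fin.last m) : PM n) : ℤ).natAbs - 1, by omega⟩, by simp only; omega⟩
      have heq : ((g • f (Fin.last m) : PM n) : ℤ).natAbs =
          ((g • f i.castSucc : PM n) : ℤ).natAbs := by rw [hi, hg]; omega
      exact (Fin.castSucc_lt_last i).ne' (hf ((natAbs_braid_smul_eq_iff g _ _).1 heq))
    have hmem := (g • f (Fin.last m)).2.2
    rw [abs_le] at hmem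
    obtain ⟨h, hh, hfix⟩ := exists_smul_eq_succ (hn := hn) _ hlast
    refine ⟨by omega, h * g, fun i => ?_⟩
    rw [mul_smul]
    induction i using Fin.lastCases with
    | last => rw [hh, Fin.val_last]
    | cast i => rw [hfix _ (by rw [hg]; omega), hg, Fin.val_castSucc]

theorem exists_smul_eq_one (x : PM n) :
    ∃ g : BraidGroupB n hn, ((g • x : PM n) : ℤ) = 1 := by
  obtain ⟨-, g, hg⟩ := exists_smul_eq_coe (hn := hn) ![x] fun i j _ => Subsingleton.elim i j
  exact ⟨g, hg 0⟩

theorem exists_smul_eq_one_two {x y : PM n} (hxy : (x : ℤ).natAbs ≠ (y : ℤ).natAbs) :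
    ∃ g : BraidGroupB n hn, ((g • x : PM n) : ℤ) = 1 ∧ ((g • y : PM n) : ℤ) = 2 := by
  obtain ⟨-, g, hg⟩ := exists_smul_eq_coe (hn := hn) ![x, y] (by
    intro i j hij
    fin_cases i <;> fin_cases j <;> simp_all)
  exact ⟨g, hg 0, hg 1⟩

theorem exists_smul_eq_one_two_three {x y z : PM n} (hxy : (x : ℤ).natAbs ≠ (y : ℤ).natAbs)
    (hxz : (x : ℤ).natAbs ≠ (z : ℤ).natAbs) (hyz : (y : ℤ).natAbs ≠ (z : ℤ).natAbs) :
    3 ≤ n ∧ ∃ g : BraidGroupB n hn, ((g • x : PM n) : ℤ) = 1 ∧ ((g • y : PM n) : ℤ) = 2 ∧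
      ((g • z : PM n) : ℤ) = 3 := by
  obtain ⟨h, g, hg⟩ := exists_smul_eq_coe (hn := hn) ![x, y, z] (by
    intro i j hij
    fin_cases i <;> fin_cases j <;> simp_all)
  exact ⟨h, g, hg 0, hg 1, hg 2⟩

theorem exists_smul_eq_one_two_three_four {x y z w : PM n}
    (hxy : (x : ℤ).natAbs ≠ (y : ℤ).natAbs) (hxz : (x : ℤ).natAbs ≠ (z : ℤ).natAbs)
    (hxw : (x : ℤ).natAbs ≠ (w : ℤ).natAbs) (hyz : (y : ℤ).natAbs ≠ (z : ℤ).natAbs)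
    (hyw : (y : ℤ).natAbs ≠ (w : ℤ).natAbs) (hzw : (z : ℤ).natAbs ≠ (w : ℤ).natAbs) :
    4 ≤ n ∧ ∃ g : BraidGroupB n hn, ((g • x : PM n) : ℤ) = 1 ∧ ((g • y : PM n) : ℤ) = 2 ∧
      ((g • z : PM n) : ℤ) = 3 ∧ ((g • w : PM n) : ℤ) = 4 := by
  obtain ⟨h, g, hg⟩ := exists_smul_eq_coe (hn := hn) ![x, y, z, w] (by
    intro i j hij
    fin_cases i <;> fin_cases j <;> simp_all)
  exact ⟨h, g, hg 0, hg 1, hg 2, hg 3⟩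

end Transitivity

/-! ### Orbits under the Artin relations -/

section Line

variable {G Y : Type*} [Group G] [MulAction G Y] {s : ℕ → G} {m N : ℕ} {y : Y}

/-- The Artin relations of type `A` for the members of a sequence with index in `[m, N)`. -/
structure IsBraidSeq (s : ℕ → G) (m N : ℕ) : Prop where
  commute {k l : ℕ} : m ≤ k → k + 2 ≤ l → l < N → Commute (s k) (s l)
  braid {k : ℕ} : m ≤ k → k + 1 < N → s k * s (k + 1) * s k = s (k + 1) * s k * s (k + 1)

theorem IsBraidSeq.mono {m' N' : ℕ} (hs : IsBraidSeq s m N) (hm : m ≤ m') (hN : N' ≤ N) :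
    IsBraidSeq s m' N' :=
  ⟨fun hk hkl hl => hs.commute (hm.trans hk) hkl (hl.trans_le hN),
    fun hk hkN => hs.braid (hm.trans hk) (hkN.trans_le hN)⟩

/-- The translate `s (j - 1) • ⋯ • s m • y`, which is `y` itself for `j ≤ m`. Under the type `A`
relations, and if `y` behaves like the point `m` under the `s k` with `k ≥ m`, the translate behaves
like the point `j`. -/
def line (s : ℕ → G) (m : ℕ) (y : Y) : ℕ → Y
  | 0 => y
  | j + 1 => if m ≤ j then s j • line s m y j else y

theorem line_self (s : ℕ → G) (m : ℕ) (y : Y) : line s m y m = y := by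
  cases m with
  | zero => rfl
  | succ m => exact if_neg m.lt_irrefl

theorem line_succ {j : ℕ} (hj : m ≤ j) : line s m y (j + 1) = s j • line s m y j := if_pos hj

theorem line_eq_line_smul {j : ℕ} (hj : m + 1 ≤ j) :
    line s m y j = line s (m + 1) (s m • y) j := by
  induction j, hj using Nat.le_induction with
  | base => rw [line_succ le_rfl, line_self, line_self]
  | succ j hj ih => rw [line_succ (by omega), line_succ hj, ih]

theorem smul_line {g : G} {j : ℕ} (hg : ∀ l, m ≤ l → l < j → Commute g (s l)) :
    g • line s m y j = line s m (g • y) j := by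
  induction j with
  | zero => rfl
  | succ j ih =>
    by_cases hj : m ≤ j
    · rw [line_succ hj, line_succ hj, smul_smul, (hg j hj j.lt_succ_self).eq, mul_smul,
        ih fun l hl hlj => hg l hl (hlj.trans j.lt_succ_self)]
    · simp only [line, if_neg hj]

namespace IsBraidSeq

variable (hs : IsBraidSeq s m N)
include hs

theorem smul_line_of_gt (hy : ∀ k, m < k → k < N → s k • y = y) {j k : ℕ} (hmj : m ≤ j)
    (hjk : j < k) (hk : k < N) : s k • line s m y j = line s m y j := by
  rw [smul_line fun l hl hlj => (hs.commute hl (by omega) hk).symm, hy k (by omega) hk]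

theorem smul_line_of_lt (hy : ∀ k, m < k → k < N → s k • y = y) {j k : ℕ} (hmk : m ≤ k)
    (hkj : k + 2 ≤ j) (hj : j ≤ N) : s k • line s m y j = line s m y j := by
  induction j, hkj using Nat.le_induction with
  | base =>
    rw [line_succ (by omega), line_succ hmk, smul_smul, smul_smul, hs.braid hmk (by omega),
      mul_smul, mul_smul, hs.smul_line_of_gt hy hmk k.lt_succ_self (by omega)]
  | succ j hkj ih =>
    rw [line_succ (by omega), smul_smul, (hs.commute hmk hkj (by omega)).eq, mul_smul,
      ih (by omega)]

theorem smul_line_succ (hy : ∀ k, m < k → k < N → s k • y = y) (hmm : s m • s m • y = y)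
    {j : ℕ} (hmj : m ≤ j) (hj : j < N) : s j • line s m y (j + 1) = line s m y j := by
  induction j, hmj using Nat.le_induction with
  | base => rw [line_succ le_rfl, line_self, hmm]
  | succ j hmj ih =>
    have hfix := hs.smul_line_of_gt hy hmj j.lt_succ_self hj
    have hback := ih (by omega)
    rw [line_succ hmj] at hback
    rw [line_succ (by omega), line_succ hmj]
    generalize line s m y j = w at hfix hback ⊢
    calc s (j + 1) • s (j + 1) • s j • w
        = s (j + 1) • (s (j + 1) * s j * s (j + 1)) • w := by rw [mul_smul, mul_smul, hfix]
      _ = s (j + 1) • (s j * s (j + 1) * s j) • w := by rw [hs.braid hmj hj]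
      _ = (s (j + 1) * s j * s (j + 1)) • s j • w := by simp only [mul_smul]
      _ = (s j * s (j + 1) * s j) • s j • w := by rw [hs.braid hmj hj]
      _ = s j • w := by rw [mul_smul, mul_smul, hback, hfix]

end IsBraidSeq

end Line

section SignedLine

variable {G Y : Type*} [Group G] [MulAction G Y] {s : ℕ → G} {N : ℕ} {y : Y}

/-- The Artin relations of type `B` for the members of a sequence with index in `[0, N)`. -/
structure IsBraidSeqB (s : ℕ → G) (N : ℕ) : Prop extends IsBraidSeq s 1 N where
  commute_zero {l : ℕ} : 2 ≤ l → l < N → Commute (s 0) (s l)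
  braid_four : s 0 * s 1 * s 0 * s 1 = s 1 * s 0 * s 1 * s 0

theorem IsBraidSeqB.mono {N' : ℕ} (hs : IsBraidSeqB s N) (hN : N' ≤ N) : IsBraidSeqB s N' :=
  ⟨hs.toIsBraidSeq.mono le_rfl hN, fun hl hlN => hs.commute_zero hl (hlN.trans_le hN),
    hs.braid_four⟩

/-- `y` behaves under the `s k` with `k < N` like the point `1` under the simple reflections of
type `B`. -/
structure IsSignedPoint (s : ℕ → G) (N : ℕ) (y : Y) : Prop where
  smul {k : ℕ} : 2 ≤ k → k < N → s k • y = y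
  zero_zero : s 0 • s 0 • y = y
  one_one : 1 < N → s 1 • s 1 • y = y
  zero_one : 1 < N → s 0 • s 1 • y = s 1 • y

/-- If `y` behaves like the point `1` then `signedLine s y a` behaves like the point `a`. -/
def signedLine (s : ℕ → G) (y : Y) (a : ℤ) : Y :=
  line s 1 (if 0 < a then y else s 0 • y) a.natAbs

theorem signedLine_natCast {j : ℕ} (hj : 1 ≤ j) : signedLine s y j = line s 1 y j := by
  rw [signedLine, if_pos (by omega), Int.natAbs_natCast]

theorem smul_signedLine_of_commute {g : G} {a : ℤ}
    (hg : ∀ l, l < a.natAbs → Commute g (s l)) (ha : a ≠ 0) :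
    g • signedLine s y a = signedLine s (g • y) a := by
  rw [signedLine, smul_line fun l _ hl => hg l hl, signedLine, smul_ite, smul_smul,
    (hg 0 (by omega)).eq, mul_smul]

namespace IsSignedPoint

theorem signedLine_neg (hy : IsSignedPoint s N y) {a : ℤ} (ha : a ≠ 0) :
    signedLine s y (-a) = signedLine s (s 0 • y) a := by
  rw [signedLine, signedLine, Int.natAbs_neg, hy.zero_zero]
  split_ifs <;> first | rfl | omega

theorem zero_smul (hs : IsBraidSeqB s N) (hy : IsSignedPoint s N y) :
    IsSignedPoint s N (s 0 • y) := by
  have zero_one_zero (hN : 1 < N) : s 0 • s 1 • s 0 • y = s 1 • s 0 • y :=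
    calc s 0 • s 1 • s 0 • y = (s 0 * s 1 * s 0 * s 1) • s 1 • y := by
          simp only [mul_smul, hy.one_one hN]
      _ = s 1 • s 0 • s 1 • s 0 • s 1 • y := by simp only [hs.braid_four, mul_smul]
      _ = s 1 • s 0 • y := by rw [hy.zero_one hN, hy.one_one hN]
  refine ⟨fun hk hkN => ?_, by rw [hy.zero_zero], fun hN => ?_, zero_one_zero⟩
  · rw [smul_smul, ← (hs.commute_zero hk hkN).eq, mul_smul, hy.smul hk hkN]
  · calc s 1 • s 1 • s 0 • y = (s 1 * s 0 * s 1 * s 0) • y := by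
          simp only [mul_smul, zero_one_zero hN]
      _ = s 0 • s 1 • s 0 • s 1 • y := by simp only [← hs.braid_four, mul_smul]
      _ = s 0 • y := by rw [hy.zero_one hN, hy.one_one hN]

theorem smul_line (hs : IsBraidSeqB s N) (hy : IsSignedPoint s N y) {j k : ℕ} (hj : 1 ≤ j)
    (hjN : j ≤ N) (hk : k < N) :
    s k • line s 1 y j = signedLine s y (simpleReflection k j) := by
  have hfix : ∀ l, 1 < l → l < N → s l • y = y := fun l => hy.smul
  rcases simpleReflection_cases k j with ⟨rfl, h1, hr⟩ | ⟨-, h, -⟩ | ⟨rfl, h1, -, hr⟩ |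
    ⟨hk0, hkj, hr⟩ | ⟨hk0, hkj, hr⟩ | ⟨-, h, -⟩ | ⟨-, h, -⟩ | ⟨hk0, hkj, hkj', -, -, hr⟩
  · obtain rfl : j = 1 := by omega
    rw [hr, line_self, hy.signedLine_neg one_ne_zero]
    exact (line_self s 1 _).symm
  · omega
  · rw [hr, signedLine_natCast hj, line_eq_line_smul (by omega),
      _root_.smul_line fun l hl hlj => hs.commute_zero hl (by omega), hy.zero_one (by omega)]
  · obtain rfl : j = k := by omega
    rw [hr, ← line_succ hj, ← signedLine_natCast (by omega), Nat.cast_succ]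
  · obtain rfl : j = k + 1 := by omega
    rw [hr, signedLine_natCast (by omega),
      hs.smul_line_succ hfix (hy.one_one (by omega)) (by omega) hk]
  · omega
  · omega
  · rw [hr, signedLine_natCast hj]
    obtain h | h : k + 2 ≤ j ∨ j < k := by omega
    exacts [hs.smul_line_of_lt hfix (by omega) h hjN, hs.smul_line_of_gt hfix hj h hk]

theorem smul_signedLine (hs : IsBraidSeqB s N) (hy : IsSignedPoint s N y) {a : ℤ} {k : ℕ}
    (ha : a ≠ 0) (haN : a.natAbs ≤ N) (hk : k < N) :
    s k • signedLine s y a = signedLine s y (simpleReflection k a) := by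
  obtain ⟨j, rfl | rfl⟩ := a.eq_nat_or_neg
  · rw [signedLine_natCast (by omega), hy.smul_line hs (by omega) (by omega) hk]
  · have hj : (j : ℤ) ≠ 0 := by omega
    have hr : simpleReflection k j ≠ 0 := by
      have := simpleReflection_cases k j
      omega
    rw [simpleReflection_neg, hy.signedLine_neg hj, hy.signedLine_neg hr,
      signedLine_natCast (by omega), (hy.zero_smul hs).smul_line hs (by omega) (by omega) hk]

end IsSignedPoint

end SignedLine

/-! ### Ties -/

section TieSystem

variable {G M : Type*} [Group G] [Monoid M] [MulDistribMulAction G M] {s : ℕ → G} {θ : ℕ → M}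
  {n : ℕ}

/-- The relations (TB1)–(TB9) for the `s k` and `θ k` with `k < n`, in terms of the conjugation
action `•` of the group generated by the `s k` on the monoid containing the `θ k`. -/
structure IsTieSystem (s : ℕ → G) (θ : ℕ → M) (n : ℕ) : Prop extends IsBraidSeqB s n where
  two_le : 2 ≤ n
  tie_mul_self {i : ℕ} : i < n → θ i * θ i = θ i
  tie_commute {i j : ℕ} : i < n → j < n → Commute (θ i) (θ j)
  one_zero_one_smul : s 1 • s 0 • s 1 • θ 0 = θ 0
  zero_one_zero_smul : s 0 • s 1 • s 0 • θ 1 = θ 1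
  smul_smul_tie {i j : ℕ} : 1 ≤ i → 1 ≤ j → i < n → j < n → i + 1 = j ∨ j + 1 = i →
    s i • s j • θ i = θ j
  smul_tie {i j : ℕ} : i < n → j < n → ¬(i + 1 = j ∨ j + 1 = i) → s i • θ j = θ j
  tie_mul_tie {i j : ℕ} : i < n → j < n → i + 1 = j ∨ j + 1 = i → θ i * θ j = θ j * s i • θ j
  commute_zero_smul : Commute (θ 1) (s 0 • θ 1)
  commute_one_smul : Commute (θ 0) (s 1 • θ 0)
  one_one_smul : s 1 • s 1 • θ 0 = θ 0
  zero_zero_smul : s 0 • s 0 • θ 1 = θ 1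
  smul_inv_smul_tie {i j : ℕ} : 1 ≤ i → 1 ≤ j → i < n → j < n → i + 1 = j ∨ j + 1 = i →
    s i • (s j)⁻¹ • θ i = θ j

/-- The tie between `a` and `b`, built from `θ 0` for `b = -a` and from `θ 1` otherwise. When
`|a| < b` one first moves the tie between `1` and `2` to `1` and `b`, and then `1` to `a`. -/
def pairTie (s : ℕ → G) (θ : ℕ → M) (a b : ℤ) : M :=
  if a = b then 1
  else if a = -b then signedLine s (θ 0) a
  else if a.natAbs < b.natAbs then
    signedLine s (line s 2 (θ 1) b.natAbs) (if 0 < b then a else -a)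
  else signedLine s (line s 2 (θ 1) a.natAbs) (if 0 < a then b else -b)

theorem pairTie_self (a : ℤ) : pairTie s θ a a = 1 := if_pos rfl

theorem pairTie_neg_right {a : ℤ} (ha : a ≠ 0) :
    pairTie s θ a (-a) = signedLine s (θ 0) a := by
  rw [pairTie, if_neg (by omega), if_pos (neg_neg a).symm]

theorem pairTie_natCast {a : ℤ} {j : ℕ} (ha : a.natAbs < j) :
    pairTie s θ a j = signedLine s (line s 2 (θ 1) j) a := by
  rw [pairTie, if_neg (by omega), if_neg (by omega), Int.natAbs_natCast, if_pos ha,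
    if_pos (by omega)]

namespace IsTieSystem

variable (h : IsTieSystem s θ n)
include h

theorem smul_smul_self {i j : ℕ} (hi : 1 ≤ i) (hj : 1 ≤ j) (hin : i < n) (hjn : j < n)
    (hij : i + 1 = j ∨ j + 1 = i) : s i • s i • θ j = θ j := by
  have hinv := (h.smul_smul_tie hj hi hjn hin hij.symm).trans
    (h.smul_inv_smul_tie hj hi hjn hin hij.symm).symm
  rw [MulAction.injective (s j) hinv, smul_inv_smul]

theorem smul_tie_eq {i j : ℕ} (hi : 1 ≤ i) (hj : 1 ≤ j) (hin : i < n) (hjn : j < n)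
    (hij : i + 1 = j ∨ j + 1 = i) : s j • θ i = s i • θ j :=
  MulAction.injective (s i) <|
    (h.smul_smul_tie hi hj hin hjn hij).trans (h.smul_smul_self hi hj hin hjn hij).symm

theorem isSignedPoint_zero : IsSignedPoint s n (θ 0) where
  smul hk hkn := h.smul_tie hkn (by omega) (by omega)
  zero_zero := by
    have := h.two_le
    have hfix : s 0 • θ 0 = θ 0 := h.smul_tie (by omega) (by omega) (by omega)
    rw [hfix, hfix]
  one_one _ := h.one_one_smul
  zero_one _ := MulAction.injective (s 1) (h.one_zero_one_smul.trans h.one_one_smul.symm)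

theorem smul_one_of_gt (k : ℕ) (hk : 2 < k) (hkn : k < n) : s k • θ 1 = θ 1 :=
  h.smul_tie hkn (by omega) (by omega)

theorem isBraidSeq_two : IsBraidSeq s 2 n := h.toIsBraidSeq.mono one_le_two le_rfl

theorem isSignedPoint_line {j : ℕ} (hj : 2 ≤ j) (hjn : j ≤ n) :
    IsSignedPoint s (j - 1) (line s 2 (θ 1) j) where
  smul hk hkj := h.isBraidSeq_two.smul_line_of_lt h.smul_one_of_gt hk (by omega) hjn
  zero_zero := by
    have hcomm : ∀ l, 2 ≤ l → l < j → Commute (s 0) (s l) :=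
      fun l hl hlj => h.commute_zero hl (by omega)
    rw [smul_line hcomm, smul_line hcomm, h.zero_zero_smul]
  one_one hj' := by
    have hcomm : ∀ l, 3 ≤ l → l < j → Commute (s 1) (s l) :=
      fun l hl hlj => h.commute le_rfl hl (by omega)
    rw [line_eq_line_smul (by omega), smul_line hcomm, smul_line hcomm,
      h.smul_smul_tie le_rfl one_le_two (by omega) (by omega) (Or.inl rfl),
      h.smul_tie_eq le_rfl one_le_two (by omega) (by omega) (Or.inl rfl)]
  zero_one hj' := by
    rw [line_eq_line_smul (by omega),
      smul_line fun l hl hlj => h.commute le_rfl hl (by omega),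
      h.smul_smul_tie le_rfl one_le_two (by omega) (by omega) (Or.inl rfl),
      smul_line fun l hl hlj => h.commute_zero (by omega) (by omega),
      h.smul_tie (by omega) (by omega) (by omega)]

theorem signedLine_tie_zero_neg {a : ℤ} (ha : a ≠ 0) :
    signedLine s (θ 0) (-a) = signedLine s (θ 0) a := by
  have := h.two_le
  rw [h.isSignedPoint_zero.signedLine_neg ha, h.smul_tie (by omega) (by omega) (by omega)]

theorem pairTie_neg {a b : ℤ} (ha : a ≠ 0) :
    pairTie s θ (-a) (-b) = pairTie s θ a b := by
  simp only [pairTie, neg_inj, Int.natAbs_neg, neg_neg, h.signedLine_tie_zero_neg ha]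
  split_ifs <;> first | rfl | omega

theorem pairTie_comm {a b : ℤ} (ha : a ≠ 0) : pairTie s θ a b = pairTie s θ b a := by
  by_cases hab : a = -b
  · obtain rfl : b = -a := by omega
    rw [pairTie_neg_right ha, ← h.signedLine_tie_zero_neg ha, ← pairTie_neg_right (by omega),
      neg_neg]
  · unfold pairTie
    split_ifs <;> first | rfl | omega

theorem smul_signedLine_line {a : ℤ} {k : ℕ} (ha : a ≠ 0) (hak : a.natAbs < k) (hkn : k < n)
    {y : M} : s k • signedLine s y a = signedLine s (s k • y) a := by
  refine smul_signedLine_of_commute (fun l hl => ?_) ha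
  rcases l.eq_zero_or_pos with rfl | hl0
  exacts [(h.commute_zero (by omega) hkn).symm, (h.commute hl0 (by omega) hkn).symm]

theorem signedLine_line_succ {a : ℤ} {k : ℕ} (hk : 1 ≤ k) (hkn : k + 1 < n) (ha : a.natAbs = k) :
    signedLine s (line s 2 (θ 1) (k + 2)) (simpleReflection k a) =
      s k • s (k + 1) • signedLine s (line s 2 (θ 1) (k + 1)) a := by
  have hpoint := h.isSignedPoint_line (j := k + 2) (by omega) (by omega)
  rw [h.smul_signedLine_line (by omega) (by omega) hkn, ← line_succ (by omega),
    hpoint.smul_signedLine (h.toIsBraidSeqB.mono (by omega)) (by omega) (by omega) (by omega)]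

theorem smul_signedLine_line_self {a : ℤ} {k : ℕ} (hk : 1 ≤ k) (hkn : k < n) (ha : a.natAbs = k) :
    s k • signedLine s (line s 2 (θ 1) (k + 1)) a =
      signedLine s (line s 2 (θ 1) (k + 1)) a := by
  induction k, hk using Nat.le_induction generalizing a with
  | base =>
    rw [line_self, signedLine, ha, line_self]
    split_ifs
    · exact h.smul_tie hkn hkn (by omega)
    · exact MulAction.injective (s 0) (h.zero_one_zero_smul.trans h.zero_zero_smul.symm)
  | succ k hk ih =>
    have hr : (simpleReflection k a).natAbs = k := by
      have := simpleReflection_cases k a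
      omega
    rw [← simpleReflection_involutive k a, h.signedLine_line_succ hk hkn hr]
    rw [smul_smul, smul_smul, ← h.braid hk hkn, mul_smul, ih (by omega) hr, mul_smul]

theorem pairTie_eq_tie {k : ℕ} (hk : 1 ≤ k) (hkn : k < n) : pairTie s θ k (k + 1 : ℕ) = θ k := by
  rw [pairTie_natCast (by omega)]
  induction k, hk using Nat.le_induction with
  | base => rw [line_self, signedLine_natCast le_rfl, line_self]
  | succ k hk ih =>
    have hr : simpleReflection k k = (k + 1 : ℕ) := by
      have := simpleReflection_cases k k
      omega
    rw [← hr, h.signedLine_line_succ hk hkn (by omega), ih (by omega),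
      h.smul_smul_tie hk (by omega) (by omega) hkn (Or.inl rfl)]

theorem smul_pairTie_of_natAbs_lt {a : ℤ} {j k : ℕ} (ha : a ≠ 0) (haj : a.natAbs < j)
    (hak : a.natAbs < k) (hjk : j ≤ k + 1) (hkn : k < n) :
    s k • pairTie s θ a j = pairTie s θ a (simpleReflection k j) := by
  have hr := simpleReflection_cases k j
  rw [pairTie_natCast haj, h.smul_signedLine_line ha hak hkn]
  obtain rfl | rfl | hlt : j = k ∨ j = k + 1 ∨ j < k := by omega
  · rw [show simpleReflection j j = (j + 1 : ℕ) by omega, pairTie_natCast (by omega),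
      line_succ (by omega)]
  · rw [show simpleReflection k (k + 1 : ℕ) = k by omega, pairTie_natCast hak,
      h.isBraidSeq_two.smul_line_succ h.smul_one_of_gt ?_ (by omega) hkn]
    exact h.smul_smul_self one_le_two le_rfl (by omega) (by omega) (Or.inr rfl)
  · rw [show simpleReflection k j = j by omega, pairTie_natCast haj,
      h.isBraidSeq_two.smul_line_of_gt h.smul_one_of_gt (by omega) hlt hkn]

theorem smul_pairTie_of_lt {a : ℤ} {j k : ℕ} (ha : a ≠ 0) (haj : a.natAbs < j) (hj : j ≤ n)
    (hkn : k < n) :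
    s k • pairTie s θ a j = pairTie s θ (simpleReflection k a) (simpleReflection k j) := by
  have hra := simpleReflection_cases k a
  have hrj := simpleReflection_cases k j
  obtain hkj | hak | hka : k + 1 < j ∨ a.natAbs < k ∧ j ≤ k + 1 ∨ a.natAbs = k ∧ j = k + 1 := by
    omega
  · rw [show simpleReflection k j = j by omega, pairTie_natCast haj,
      pairTie_natCast (a := simpleReflection k a) (by omega),
      (h.isSignedPoint_line (by omega) hj).smul_signedLine (h.toIsBraidSeqB.mono (by omega)) ha
        (by omega) (by omega)]
  · rw [show simpleReflection k a = a by omega,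
      h.smul_pairTie_of_natAbs_lt ha haj hak.1 hak.2 hkn]
  · obtain ⟨hka, rfl⟩ := hka
    have hr : pairTie s θ (simpleReflection k a) (simpleReflection k (k + 1 : ℕ)) =
        pairTie s θ a (k + 1 : ℕ) := by
      obtain hak | hak : a = k ∨ a = -k := by omega
      · rw [show simpleReflection k a = (k + 1 : ℕ) by omega,
          show simpleReflection k (k + 1 : ℕ) = a by omega, h.pairTie_comm (by omega)]
      · rw [show simpleReflection k a = -(k + 1 : ℕ) by omega,
          show simpleReflection k (k + 1 : ℕ) = -a by omega, h.pairTie_neg (by omega),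
          h.pairTie_comm (by omega)]
    rw [hr, pairTie_natCast haj, h.smul_signedLine_line_self (by omega) hkn hka]

theorem smul_pairTie {a b : ℤ} {k : ℕ} (ha : a ≠ 0) (hb : b ≠ 0) (han : a.natAbs ≤ n)
    (hbn : b.natAbs ≤ n) (hkn : k < n) :
    s k • pairTie s θ a b = pairTie s θ (simpleReflection k a) (simpleReflection k b) := by
  have r_ne_zero {c : ℤ} (hc : c ≠ 0) : simpleReflection k c ≠ 0 := by
    have := simpleReflection_cases k c
    omega
  wlog hab : a.natAbs ≤ b.natAbs generalizing a b
  · rw [h.pairTie_comm ha, this hb ha hbn han (by omega), h.pairTie_comm (r_ne_zero hb)]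
  wlog hpos : 0 < b generalizing a b
  · have hneg := this (a := -a) (b := -b) (by omega) (by omega) (by omega) (by omega) (by omega)
      (by omega)
    rwa [simpleReflection_neg, simpleReflection_neg, h.pairTie_neg ha,
      h.pairTie_neg (r_ne_zero ha)] at hneg
  lift b to ℕ using hpos.le
  obtain rfl | hneg | hlt : a = b ∨ b = -a ∨ a.natAbs < b := by omega
  · rw [pairTie_self, pairTie_self, smul_one]
  · rw [hneg, simpleReflection_neg, pairTie_neg_right ha,
      pairTie_neg_right (r_ne_zero ha),
      h.isSignedPoint_zero.smul_signedLine h.toIsBraidSeqB ha han hkn]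
  · exact h.smul_pairTie_of_lt ha hlt hbn hkn

end IsTieSystem

end TieSystem

namespace IsTieSystem

variable {G M : Type*} [Group G] [Monoid M] [MulDistribMulAction G M] {s : ℕ → G} {θ : ℕ → M}
  {n : ℕ} (h : IsTieSystem s θ n)
include h

theorem pairTie_neg_one_one : pairTie s θ (-1) 1 = θ 0 := by
  rw [h.pairTie_comm (by omega), pairTie_neg_right one_ne_zero]
  exact (signedLine_natCast le_rfl).trans (line_self s 1 (θ 0))

theorem pairTie_one_two : pairTie s θ 1 2 = θ 1 :=
  h.pairTie_eq_tie le_rfl h.two_le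

theorem pairTie_two_three (hn : 3 ≤ n) : pairTie s θ 2 3 = θ 2 :=
  h.pairTie_eq_tie one_le_two hn

theorem pairTie_three_four (hn : 4 ≤ n) : pairTie s θ 3 4 = θ 3 :=
  h.pairTie_eq_tie (k := 3) (by omega) hn

theorem pairTie_neg_two_two : pairTie s θ (-2) 2 = s 1 • θ 0 := by
  have := h.two_le
  rw [← h.pairTie_neg_one_one,
    h.smul_pairTie (by omega) (by omega) (by omega) (by omega) (by omega)]
  rfl

theorem pairTie_neg_one_two : pairTie s θ (-1) 2 = s 0 • θ 1 := by
  have := h.two_le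
  rw [← h.pairTie_one_two,
    h.smul_pairTie (by omega) (by omega) (by omega) (by omega) (by omega)]
  rfl

theorem pairTie_one_three (hn : 3 ≤ n) : pairTie s θ 1 3 = s 1 • θ 2 := by
  rw [← h.pairTie_two_three hn,
    h.smul_pairTie (by omega) (by omega) (by omega) (by omega) (by omega)]
  rfl

end IsTieSystem

theorem PM.eq_or_eq_neg {n : ℕ} {x y : PM n} (hxy : (x : ℤ).natAbs = (y : ℤ).natAbs) :
    y = x ∨ y = x.neg :=
  (Int.natAbs_eq_natAbs_iff.1 hxy.symm).imp Subtype.ext Subtype.ext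

section BraidTie

variable {n : ℕ} (hn : 2 ≤ n)

/-- The generators of the Artin group of type `B` as a sequence, with junk value `1` for `n ≤ k`. -/
def braidGen (k : ℕ) : BraidGroupB n hn := if hk : k < n then PresentedGroup.of ⟨k, hk⟩ else 1

variable {hn}

theorem braidGen_of_lt {k : ℕ} (hk : k < n) : braidGen hn k = PresentedGroup.of ⟨k, hk⟩ :=
  dif_pos hk

theorem coe_braidGen_smul {k : ℕ} (hk : k < n) (x : PM n) :
    ((braidGen hn k • x : PM n) : ℤ) = simpleReflection k x := by
  rw [braidGen_of_lt hk, coe_of_smul]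

theorem isBraidSeqB_braidGen : IsBraidSeqB (braidGen hn) n where
  commute {k l} _ hkl hl := by
    rw [braidGen_of_lt hl, braidGen_of_lt (by omega)]
    exact PresentedGroup.mk_eq_mk_of_mul_inv_mem (BBRelator.bb3 _ _ (Or.inl hkl))
  braid {k} hk hkn := by
    rw [braidGen_of_lt hkn, braidGen_of_lt (by omega)]
    exact PresentedGroup.mk_eq_mk_of_mul_inv_mem
      (BBRelator.bb2 _ _ hk (Nat.le_add_left 1 k) (Or.inl rfl))
  commute_zero {l} hl hln := by
    rw [braidGen_of_lt hln, braidGen_of_lt (by omega)]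
    exact PresentedGroup.mk_eq_mk_of_mul_inv_mem (BBRelator.bb3 _ _ (Or.inl hl))
  braid_four := by
    rw [braidGen_of_lt (by omega), braidGen_of_lt (by omega)]
    exact PresentedGroup.mk_eq_mk_of_mul_inv_mem BBRelator.bb1

variable {M : Type*} [Monoid M]

/-- The relations between the generators `join x y` of the monoid of `B_n`-partitions, for a family
of elements `e x y` of any monoid. -/
structure IsPairSystem (e : PM n → PM n → M) : Prop where
  self (x : PM n) : e x x = 1
  comm (x y : PM n) : e x y = e y x
  neg (x y : PM n) : e x.neg y.neg = e x y
  commute (x y z w : PM n) : Commute (e x y) (e z w)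
  mul_trans (x y z : PM n) : e x y * e y z = e y z * e x z
  mul_zero (x y : PM n) : e x y * e x.neg x = e x.neg x * e y.neg y

variable [MulDistribMulAction (BraidGroupB n hn) M] {θ : ℕ → M}

variable (hn θ) in
/-- The family `pairTie` for the Artin group of type `B`, indexed by `[±n]`. -/
def braidTie (x y : PM n) : M := pairTie (braidGen hn) θ x y

theorem braidTie_self (x : PM n) : braidTie hn θ x x = 1 := pairTie_self _

namespace IsTieSystem

variable (h : IsTieSystem (braidGen hn) θ n)
include h

theorem smul_braidTie (g : BraidGroupB n hn) (x y : PM n) :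
    g • braidTie hn θ x y = braidTie hn θ (g • x) (g • y) := by
  let H : Subgroup (BraidGroupB n hn) :=
    { carrier := {g | ∀ x y, g • braidTie hn θ x y = braidTie hn θ (g • x) (g • y)}
      mul_mem' := fun ha hb x y => by simp only [mul_smul, hb x y, ha _ _]
      one_mem' := fun x y => by simp only [one_smul]
      inv_mem' := fun {a} ha x y => by
        rw [inv_smul_eq_iff, ha, smul_inv_smul, smul_inv_smul] }
  refine PresentedGroup.generated_by _ H (fun i x y => ?_) g x y
  have hx := abs_le.1 x.2.2
  have hy := abs_le.1 y.2.2
  rw [← braidGen_of_lt i.2, braidTie, braidTie, coe_braidGen_smul i.2, coe_braidGen_smul i.2,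
    h.smul_pairTie x.2.1 y.2.1 (by omega) (by omega) i.2]

theorem mul_eq_mul_of_smul {g : BraidGroupB n hn} {x y z w x' y' z' w' : PM n}
    (hg : braidTie hn θ (g • x) (g • y) * braidTie hn θ (g • z) (g • w) =
      braidTie hn θ (g • x') (g • y') * braidTie hn θ (g • z') (g • w')) :
    braidTie hn θ x y * braidTie hn θ z w = braidTie hn θ x' y' * braidTie hn θ z' w' :=
  MulAction.injective g <| by
    simpa only [smul_mul', h.smul_braidTie] using hg

theorem commute_of_smul {g : BraidGroupB n hn} {x y z w : PM n}
    (hg : Commute (braidTie hn θ (g • x) (g • y)) (braidTie hn θ (g • z) (g • w))) :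
    Commute (braidTie hn θ x y) (braidTie hn θ z w) :=
  h.mul_eq_mul_of_smul hg.eq

theorem braidTie_comm (x y : PM n) : braidTie hn θ x y = braidTie hn θ y x :=
  h.pairTie_comm x.2.1

theorem braidTie_neg (x y : PM n) : braidTie hn θ x.neg y.neg = braidTie hn θ x y :=
  h.pairTie_neg x.2.1

theorem braidTie_neg_right (x : PM n) : braidTie hn θ x x.neg = braidTie hn θ x.neg x :=
  h.braidTie_comm x x.neg

theorem braidTie_neg_left (x y : PM n) : braidTie hn θ x.neg y = braidTie hn θ x y.neg := by
  rw [← h.braidTie_neg, PM.neg_neg]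

theorem braidTie_mul_self (x y : PM n) :
    braidTie hn θ x y * braidTie hn θ x y = braidTie hn θ x y := by
  have := h.two_le
  by_cases hxy : (x : ℤ).natAbs = (y : ℤ).natAbs
  · rcases PM.eq_or_eq_neg hxy with rfl | rfl
    · rw [braidTie_self, mul_one]
    · obtain ⟨g, hg⟩ := exists_smul_eq_one (hn := hn) x
      refine (smul_left_cancel_iff g).1 ?_
      rw [h.braidTie_neg_right, smul_mul', h.smul_braidTie]
      simp only [braidTie, braid_smul_neg, PM.coe_neg, hg,
        h.pairTie_neg_one_one, h.tie_mul_self (i := 0) (by omega)]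
  · obtain ⟨g, hgx, hgy⟩ := exists_smul_eq_one_two (hn := hn) hxy
    refine (smul_left_cancel_iff g).1 ?_
    rw [smul_mul', h.smul_braidTie]
    simp only [braidTie, hgx, hgy, h.pairTie_one_two,
      h.tie_mul_self (i := 1) (by omega)]

theorem commute_neg_neg (x z : PM n) :
    Commute (braidTie hn θ x.neg x) (braidTie hn θ z.neg z) := by
  by_cases hxz : (x : ℤ).natAbs = (z : ℤ).natAbs
  · rcases PM.eq_or_eq_neg hxz with rfl | rfl
    · exact Commute.refl _
    · rw [PM.neg_neg, h.braidTie_neg_right x]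
  · obtain ⟨g, hgx, hgz⟩ := exists_smul_eq_one_two (hn := hn) hxz
    refine h.commute_of_smul (g := g) ?_
    simp only [braidTie, braid_smul_neg, PM.coe_neg, hgx, hgz, h.pairTie_neg_one_one,
      h.pairTie_neg_two_two, h.commute_one_smul]

theorem commute_neg_self {x w : PM n} (hxw : (x : ℤ).natAbs ≠ (w : ℤ).natAbs) :
    Commute (braidTie hn θ x.neg x) (braidTie hn θ x w) := by
  have := h.two_le
  obtain ⟨g, hgx, hgw⟩ := exists_smul_eq_one_two (hn := hn) hxw
  refine h.commute_of_smul (g := g) ?_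
  simp only [braidTie, braid_smul_neg, PM.coe_neg, hgx, hgw, h.pairTie_neg_one_one,
    h.pairTie_one_two, h.tie_commute (i := 0) (j := 1) (by omega) (by omega)]

theorem commute_neg_of_disjoint {x z w : PM n} (hxz : (x : ℤ).natAbs ≠ (z : ℤ).natAbs)
    (hxw : (x : ℤ).natAbs ≠ (w : ℤ).natAbs) (hzw : (z : ℤ).natAbs ≠ (w : ℤ).natAbs) :
    Commute (braidTie hn θ x.neg x) (braidTie hn θ z w) := by
  obtain ⟨hn3, g, hgx, hgz, hgw⟩ := exists_smul_eq_one_two_three (hn := hn) hxz hxw hzw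
  refine h.commute_of_smul (g := g) ?_
  simp only [braidTie, braid_smul_neg, PM.coe_neg, hgx, hgz, hgw, h.pairTie_neg_one_one,
    h.pairTie_two_three hn3, h.tie_commute (i := 0) (j := 2) (by omega) (by omega)]

theorem commute_neg (x z w : PM n) :
    Commute (braidTie hn θ x.neg x) (braidTie hn θ z w) := by
  by_cases hzw : (z : ℤ).natAbs = (w : ℤ).natAbs
  · rcases PM.eq_or_eq_neg hzw with rfl | rfl
    · rw [braidTie_self]
      exact Commute.one_right _
    · exact h.braidTie_neg_right z ▸ h.commute_neg_neg x z
  wlog hxw : (x : ℤ).natAbs ≠ (w : ℤ).natAbs generalizing z w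
  · exact h.braidTie_comm z w ▸ this w z (Ne.symm hzw) (by omega)
  by_cases hxz : (x : ℤ).natAbs = (z : ℤ).natAbs
  · rcases PM.eq_or_eq_neg hxz with rfl | rfl
    · exact h.commute_neg_self hxw
    · rw [h.braidTie_neg_left x w]
      exact h.commute_neg_self (by rwa [PM.coe_neg, Int.natAbs_neg])
  · exact h.commute_neg_of_disjoint hxz hxw hzw

theorem commute_of_common {x y w : PM n} (hxy : (x : ℤ).natAbs ≠ (y : ℤ).natAbs)
    (hxw : (x : ℤ).natAbs ≠ (w : ℤ).natAbs) :
    Commute (braidTie hn θ x y) (braidTie hn θ x w) := by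
  by_cases hyw : (y : ℤ).natAbs = (w : ℤ).natAbs
  · rcases PM.eq_or_eq_neg hyw with rfl | rfl
    · exact Commute.refl _
    · obtain ⟨g, hgy, hgx⟩ := exists_smul_eq_one_two (hn := hn) hxy.symm
      rw [h.braidTie_comm x y, h.braidTie_comm x]
      refine h.commute_of_smul (g := g) ?_
      simp only [braidTie, braid_smul_neg, PM.coe_neg, hgx, hgy, h.pairTie_one_two,
        h.pairTie_neg_one_two, h.commute_zero_smul]
  · obtain ⟨hn3, g, hgy, hgx, hgw⟩ := exists_smul_eq_one_two_three (hn := hn) hxy.symm hyw hxw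
    rw [h.braidTie_comm x y]
    refine h.commute_of_smul (g := g) ?_
    simp only [braidTie, hgx, hgy, hgw, h.pairTie_one_two, h.pairTie_two_three hn3,
      h.tie_commute (i := 1) (j := 2) (by omega) (by omega)]

theorem commute_of_disjoint {x y z w : PM n}
    (hxy : (x : ℤ).natAbs ≠ (y : ℤ).natAbs) (hxz : (x : ℤ).natAbs ≠ (z : ℤ).natAbs)
    (hxw : (x : ℤ).natAbs ≠ (w : ℤ).natAbs) (hyz : (y : ℤ).natAbs ≠ (z : ℤ).natAbs)
    (hyw : (y : ℤ).natAbs ≠ (w : ℤ).natAbs) (hzw : (z : ℤ).natAbs ≠ (w : ℤ).natAbs) :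
    Commute (braidTie hn θ x y) (braidTie hn θ z w) := by
  obtain ⟨hn4, g, hgx, hgy, hgz, hgw⟩ :=
    exists_smul_eq_one_two_three_four (hn := hn) hxy hxz hxw hyz hyw hzw
  refine h.commute_of_smul (g := g) ?_
  simp only [braidTie, hgx, hgy, hgz, hgw, h.pairTie_one_two, h.pairTie_three_four hn4,
    h.tie_commute (i := 1) (j := 3) (by omega) (by omega)]

theorem commute_braidTie (x y z w : PM n) :
    Commute (braidTie hn θ x y) (braidTie hn θ z w) := by
  have of_eq {x y z w : PM n} (hxy : (x : ℤ).natAbs = (y : ℤ).natAbs) :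
      Commute (braidTie hn θ x y) (braidTie hn θ z w) := by
    rcases PM.eq_or_eq_neg hxy with rfl | rfl
    · rw [braidTie_self]
      exact Commute.one_left _
    · exact h.braidTie_neg_right x ▸ h.commute_neg x z w
  by_cases hxy : (x : ℤ).natAbs = (y : ℤ).natAbs
  · exact of_eq hxy
  by_cases hzw : (z : ℤ).natAbs = (w : ℤ).natAbs
  · exact (of_eq hzw).symm
  by_cases hdisj : (x : ℤ).natAbs ≠ (z : ℤ).natAbs ∧ (x : ℤ).natAbs ≠ (w : ℤ).natAbs ∧
      (y : ℤ).natAbs ≠ (z : ℤ).natAbs ∧ (y : ℤ).natAbs ≠ (w : ℤ).natAbs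
  · exact h.commute_of_disjoint hxy hdisj.1 hdisj.2.1 hdisj.2.2.1 hdisj.2.2.2 hzw
  wlog hx : (x : ℤ).natAbs = (z : ℤ).natAbs ∨ (x : ℤ).natAbs = (w : ℤ).natAbs generalizing x y
  · rw [h.braidTie_comm]
    exact this y x (Ne.symm hxy) (by omega) (by omega)
  wlog hxz : (x : ℤ).natAbs = (z : ℤ).natAbs generalizing z w
  · rw [h.braidTie_comm z]
    exact this w z (Ne.symm hzw) (by omega) hx.symm (by omega)
  rcases PM.eq_or_eq_neg hxz with rfl | rfl
  · exact h.commute_of_common hxy hzw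
  · rw [h.braidTie_neg_left x w]
    exact h.commute_of_common hxy (by rwa [PM.coe_neg, Int.natAbs_neg, hxz])

theorem neg_mul_trans {y z : PM n} (hyz : (y : ℤ).natAbs ≠ (z : ℤ).natAbs) :
    braidTie hn θ y.neg y * braidTie hn θ y z = braidTie hn θ y z * braidTie hn θ y.neg z := by
  have := h.two_le
  obtain ⟨g, hgy, hgz⟩ := exists_smul_eq_one_two (hn := hn) hyz
  refine h.mul_eq_mul_of_smul (g := g) ?_
  simp only [braidTie, braid_smul_neg, PM.coe_neg, hgy, hgz,
    h.pairTie_neg_one_one, h.pairTie_one_two, h.pairTie_neg_one_two,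
    h.tie_mul_tie (i := 0) (j := 1) (by omega) (by omega) (Or.inl rfl)]

theorem mul_trans_of_disjoint {x y z : PM n} (hxy : (x : ℤ).natAbs ≠ (y : ℤ).natAbs)
    (hxz : (x : ℤ).natAbs ≠ (z : ℤ).natAbs) (hyz : (y : ℤ).natAbs ≠ (z : ℤ).natAbs) :
    braidTie hn θ x y * braidTie hn θ y z = braidTie hn θ y z * braidTie hn θ x z := by
  obtain ⟨hn3, g, hgx, hgy, hgz⟩ := exists_smul_eq_one_two_three (hn := hn) hxy hxz hyz
  refine h.mul_eq_mul_of_smul (g := g) ?_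
  simp only [braidTie, hgx, hgy, hgz, h.pairTie_one_two,
    h.pairTie_two_three hn3, h.pairTie_one_three hn3,
    h.tie_mul_tie (i := 1) (j := 2) (by omega) (by omega) (Or.inl rfl)]

theorem mul_neg {x y : PM n} (hxy : (x : ℤ).natAbs ≠ (y : ℤ).natAbs) :
    braidTie hn θ x y * braidTie hn θ x.neg x =
      braidTie hn θ x.neg x * braidTie hn θ y.neg y := by
  have := h.two_le
  obtain ⟨g, hgx, hgy⟩ := exists_smul_eq_one_two (hn := hn) hxy
  refine h.mul_eq_mul_of_smul (g := g) ?_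
  simp only [braidTie, braid_smul_neg, PM.coe_neg, hgx, hgy,
    h.pairTie_neg_one_one, h.pairTie_one_two, h.pairTie_neg_two_two,
    h.tie_mul_tie (i := 1) (j := 0) (by omega) (by omega) (Or.inr rfl)]

theorem mul_trans_neg_right {x y : PM n} (hxy : (x : ℤ).natAbs ≠ (y : ℤ).natAbs) :
    braidTie hn θ x y * braidTie hn θ y y.neg =
      braidTie hn θ y y.neg * braidTie hn θ x y.neg := by
  have hy := h.neg_mul_trans hxy.symm
  have hy' := h.neg_mul_trans (y := y.neg) (z := x) (by rwa [PM.coe_neg, Int.natAbs_neg, ne_comm])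
  rw [PM.neg_neg] at hy'
  rw [h.braidTie_comm x y, h.braidTie_comm x, hy', (h.commute_braidTie y x _ _).eq,
    h.braidTie_neg_right, hy, (h.commute_braidTie _ _ _ _).eq]

theorem mul_trans_neg {x y : PM n} (hxy : (x : ℤ).natAbs ≠ (y : ℤ).natAbs) :
    braidTie hn θ x y * braidTie hn θ y x.neg =
      braidTie hn θ y x.neg * braidTie hn θ x x.neg := by
  have hx := h.neg_mul_trans (y := x.neg) (z := y) (by rwa [PM.coe_neg, Int.natAbs_neg])
  rw [PM.neg_neg] at hx
  rw [(h.commute_braidTie x y _ _).eq, h.braidTie_comm y, ← hx, (h.commute_braidTie _ _ _ _).eq]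

theorem mul_trans (x y z : PM n) :
    braidTie hn θ x y * braidTie hn θ y z = braidTie hn θ y z * braidTie hn θ x z := by
  by_cases hxz : (x : ℤ).natAbs = (z : ℤ).natAbs
  · by_cases hxy : (x : ℤ).natAbs = (y : ℤ).natAbs
    · rcases PM.eq_or_eq_neg hxz with rfl | rfl <;> rcases PM.eq_or_eq_neg hxy with rfl | rfl
      · rfl
      · rw [h.braidTie_comm z, h.braidTie_mul_self, braidTie_self, mul_one]
      · rw [braidTie_self, one_mul, h.braidTie_mul_self]
      · rw [braidTie_self, one_mul, mul_one]
    · rcases PM.eq_or_eq_neg hxz with rfl | rfl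
      · rw [h.braidTie_comm z, h.braidTie_mul_self, braidTie_self, mul_one]
      · exact h.mul_trans_neg hxy
  by_cases hxy : (x : ℤ).natAbs = (y : ℤ).natAbs
  · rcases PM.eq_or_eq_neg hxy with rfl | rfl
    · rw [braidTie_self, one_mul, h.braidTie_mul_self]
    · simpa only [PM.neg_neg] using
        h.neg_mul_trans (y := x.neg) (z := z) (by rwa [PM.coe_neg, Int.natAbs_neg])
  by_cases hyz : (y : ℤ).natAbs = (z : ℤ).natAbs
  · rcases PM.eq_or_eq_neg hyz with rfl | rfl
    · rw [braidTie_self, one_mul, mul_one]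
    · exact h.mul_trans_neg_right hxy
  · exact h.mul_trans_of_disjoint hxy hxz hyz

theorem isPairSystem_braidTie : IsPairSystem (braidTie hn θ) where
  self := braidTie_self
  comm := h.braidTie_comm
  neg := h.braidTie_neg
  commute := h.commute_braidTie
  mul_trans := h.mul_trans
  mul_zero x y := by
    by_cases hxy : (x : ℤ).natAbs = (y : ℤ).natAbs
    · rcases PM.eq_or_eq_neg hxy with rfl | rfl
      · rw [h.braidTie_mul_self, braidTie_self, one_mul]
      · rw [PM.neg_neg, h.braidTie_neg_right]
    · exact h.mul_neg hxy

end IsTieSystem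

end BraidTie

/-! ### Partitions as products of ties -/

instance (n : ℕ) : Finite (PM n) :=
  Set.Finite.subset (Set.finite_Icc (-(n : ℤ)) n) fun _ hk => abs_le.1 hk.2

namespace BPartition

variable {n : ℕ}

/-- The finite set of pairs of elements lying in a common block of a `B_n`-partition. -/
noncomputable def relFinset (I : BPartition n) : Finset (PM n × PM n) :=
  (Set.toFinite {p : PM n × PM n | I.1 p.1 p.2}).toFinset

theorem mem_relFinset {I : BPartition n} {p : PM n × PM n} : p ∈ I.relFinset ↔ I.1 p.1 p.2 :=
  Set.Finite.mem_toFinset _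

theorem eq_sup_join (I : BPartition n) : I = I.relFinset.sup fun p => join p.1 p.2 :=
  le_antisymm
    (fun x y hxy => join_le_iff.1 (Finset.le_sup (f := fun p : PM n × PM n => join p.1 p.2)
      (mem_relFinset.2 hxy : (x, y) ∈ I.relFinset)))
    (Finset.sup_le fun _ hp => join_le_iff.2 (mem_relFinset.1 hp))

theorem hom_ext {M : Type*} [Monoid M] {f g : BPartition n →* M}
    (h : ∀ x y, f (join x y) = g (join x y)) : f = g := by
  ext I
  rw [eq_sup_join I]
  refine Finset.sup_induction (p := fun J => f J = g J)
    ((map_one f).trans (map_one g).symm) (fun J hJ K hK => ?_) fun p _ => h p.1 p.2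
  rw [← mul_eq_sup, map_mul, map_mul, hJ, hK]

end BPartition

namespace IsPairSystem

open BPartition

variable {n : ℕ} {M : Type*} [Monoid M] {e : PM n → PM n → M} (he : IsPairSystem e)
include he

theorem mul_self (x y : PM n) : e x y * e x y = e x y := by
  rw [← he.mul_trans, he.self, one_mul]

/-- The `B_n`-partition formed by the pairs `(x, y)` such that `b` absorbs `e x y`. -/
def absorbed (b : M) : BPartition n :=
  ⟨{ r := fun x y => b * e x y = b
     iseqv :=
      { refl := fun x => by rw [he.self, mul_one]
        symm := fun {x y} hxy => by rwa [he.comm]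
        trans := fun {x y z} hxy hyz => by
          rw [← hyz, mul_assoc, ← he.mul_trans, ← mul_assoc, hxy] } },
    (isBPart_iff _).2
      ⟨fun x y => show b * e x y = b ↔ b * e x.neg y.neg = b by rw [he.neg],
        fun x y (hx : b * e x x.neg = b) (hy : b * e y y.neg = b) => show b * e x y = b by
          rw [he.comm] at hx hy
          rw [← hx, mul_assoc, (he.commute _ _ _ _).eq, he.mul_zero, ← mul_assoc, hx, hy]⟩⟩

theorem pairwise_commute (s : Set (PM n × PM n)) :
    s.Pairwise (Function.onFun Commute fun p => e p.1 p.2) :=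
  fun _ _ _ _ _ => he.commute _ _ _ _

/-- The product of all `e x y` for `x` and `y` in a common block of `I`. -/
noncomputable def blockProd (I : BPartition n) : M :=
  I.relFinset.noncommProd (fun p => e p.1 p.2) (he.pairwise_commute _)

theorem commute_blockProd {b : M} (hb : ∀ x y, Commute b (e x y)) (I : BPartition n) :
    Commute b (he.blockProd I) :=
  Finset.noncommProd_commute _ _ _ _ fun _ _ => hb _ _

theorem blockProd_commute (I : BPartition n) (x y : PM n) : Commute (he.blockProd I) (e x y) :=
  (he.commute_blockProd (he.commute x y) I).symm

theorem blockProd_mul_of_rel {I : BPartition n} {x y : PM n} (hxy : I.1 x y) :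
    he.blockProd I * e x y = he.blockProd I := by
  classical
  have hmem : (x, y) ∈ I.relFinset := mem_relFinset.2 hxy
  rw [blockProd, ← Finset.noncommProd_erase_mul _ hmem, mul_assoc, he.mul_self]

theorem mul_blockProd_of_le {b : M} {I : BPartition n} (hI : I ≤ he.absorbed b) :
    b * he.blockProd I = b :=
  Finset.noncommProd_induction _ _ _ (fun m => b * m = b)
    (fun m m' hm hm' => by rw [← mul_assoc, hm, hm']) (mul_one b)
    fun _ hp => hI (mem_relFinset.1 hp)

theorem blockProd_mul_of_le {I J : BPartition n} (hIJ : I ≤ J) :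
    he.blockProd J * he.blockProd I = he.blockProd J :=
  he.mul_blockProd_of_le fun _ _ hxy => he.blockProd_mul_of_rel (hIJ hxy)

theorem blockProd_bot : he.blockProd ⊥ = 1 := by
  rw [← one_mul (he.blockProd ⊥), he.mul_blockProd_of_le bot_le]

theorem blockProd_join (x y : PM n) : he.blockProd (join x y) = e x y := by
  rw [← he.blockProd_mul_of_rel (rel_join x y), (he.blockProd_commute _ _ _).eq]
  exact he.mul_blockProd_of_le (join_le_iff.2 (he.mul_self x y))

theorem blockProd_sup (I J : BPartition n) :
    he.blockProd (I ⊔ J) = he.blockProd I * he.blockProd J := by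
  set b := he.blockProd I * he.blockProd J
  have hI : I ≤ he.absorbed b := fun x y hxy => show b * e x y = b by
    rw [mul_assoc, (he.blockProd_commute J x y).eq, ← mul_assoc, he.blockProd_mul_of_rel hxy]
  have hJ : J ≤ he.absorbed b := fun x y hxy => show b * e x y = b by
    rw [mul_assoc, he.blockProd_mul_of_rel hxy]
  have hb : ∀ x y, Commute b (e x y) := fun x y =>
    (he.blockProd_commute I x y).mul_left (he.blockProd_commute J x y)
  rw [← he.mul_blockProd_of_le (sup_le hI hJ), (he.commute_blockProd hb _).eq, ← mul_assoc,
    he.blockProd_mul_of_le le_sup_left, he.blockProd_mul_of_le le_sup_right]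

/-- The monoid of `B_n`-partitions is presented by the generators `join x y` and the relations
of `IsPairSystem`: this is the homomorphism sending `join x y` to `e x y`. -/
noncomputable def lift : BPartition n →* M where
  toFun := he.blockProd
  map_one' := he.blockProd_bot
  map_mul' := he.blockProd_sup

theorem lift_join (x y : PM n) : he.lift (join x y) = e x y := he.blockProd_join x y

end IsPairSystem

theorem IsTieSystem.smul_lift {n : ℕ} {hn : 2 ≤ n} {M : Type*} [Monoid M]
    [MulDistribMulAction (BraidGroupB n hn) M] {θ : ℕ → M} (h : IsTieSystem (braidGen hn) θ n)
    (g : BraidGroupB n hn) (I : BPartition n) :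
    g • h.isPairSystem_braidTie.lift I = h.isPairSystem_braidTie.lift (g • I) := by
  have key : (MulDistribMulAction.toMonoidHom M g).comp h.isPairSystem_braidTie.lift =
      h.isPairSystem_braidTie.lift.comp (MulDistribMulAction.toMonoidHom (BPartition n) g) :=
    BPartition.hom_ext fun x y => by
      simp only [MonoidHom.comp_apply, MulDistribMulAction.toMonoidHom_apply, braid_smul_join,
        IsPairSystem.lift_join, h.smul_braidTie]
  exact DFunLike.congr_fun key I

/-! ### The tied monoid -/

/-- The tied monoid of type `B`. -/
abbrev TiedMonoidB (n : ℕ) (hn : 2 ≤ n) := PresentedMonoid (TBRel n hn)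

namespace TiedMonoidB

variable {n : ℕ} {hn : 2 ≤ n}

theorem mk_eq_mk {a b : FreeMonoid (TBGen n)} (h : TBRel n hn a b) :
    PresentedMonoid.mk (TBRel n hn) a = PresentedMonoid.mk (TBRel n hn) b :=
  PresentedMonoid.mk_eq_mk_of_rel h

variable (hn) in
/-- The generator `s_i` of the tied monoid as a unit, with inverse `s_i'`. -/
def braidGenUnit (i : Fin n) : (TiedMonoidB n hn)ˣ :=
  ⟨PresentedMonoid.of _ (.s i), PresentedMonoid.of _ (.s' i), mk_eq_mk (.BB0a i),
    mk_eq_mk (.BB0b i)⟩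

variable (hn) in
/-- The homomorphism from the Artin group sending `σ_i` to `s_i`. -/
def braidUnit : BraidGroupB n hn →* (TiedMonoidB n hn)ˣ :=
  PresentedGroup.toGroup (f := braidGenUnit hn) <| by
    rintro _ (_ | ⟨i, j, hi, hj, h⟩ | ⟨i, j, h⟩) <;>
      simp only [map_mul, map_inv, FreeGroup.lift_apply_of] <;> rw [mul_inv_eq_one] <;>
      refine Units.ext ?_
    exacts [mk_eq_mk .BB1, mk_eq_mk (.BB2 i j hi hj h), mk_eq_mk (.BB3 i j h)]

theorem braidUnit_of (i : Fin n) : braidUnit hn (PresentedGroup.of i) = braidGenUnit hn i :=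
  PresentedGroup.toGroup.of _

/-- The Artin group acts on the tied monoid by conjugation. -/
instance : MulDistribMulAction (BraidGroupB n hn) (TiedMonoidB n hn) :=
  MulDistribMulAction.compHom _ (ConjAct.toConjAct.toMonoidHom.comp (braidUnit hn))

theorem smul_def (g : BraidGroupB n hn) (m : TiedMonoidB n hn) :
    g • m = braidUnit hn g * m * ↑(braidUnit hn g)⁻¹ := rfl

theorem braidUnit_mul (g : BraidGroupB n hn) (m : TiedMonoidB n hn) :
    braidUnit hn g * m = g • m * braidUnit hn g := by
  rw [smul_def, Units.inv_mul_cancel_right]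

theorem smul_eq_iff {g : BraidGroupB n hn} {m m' : TiedMonoidB n hn} :
    g • m = m' ↔ braidUnit hn g * m = m' * braidUnit hn g := by
  rw [braidUnit_mul, Units.mul_left_inj]

theorem smul_smul_eq_iff {g g' : BraidGroupB n hn} {m m' : TiedMonoidB n hn} :
    g • g' • m = m' ↔
      braidUnit hn g * ↑(braidUnit hn g') * m = m' * braidUnit hn g * braidUnit hn g' := by
  rw [← mul_smul, smul_eq_iff, map_mul, Units.val_mul, ← mul_assoc]

theorem commute_smul {g : BraidGroupB n hn} {m : TiedMonoidB n hn}
    (h₁ : m * braidUnit hn g * m * braidUnit hn g = braidUnit hn g * m * braidUnit hn g * m)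
    (h₂ : braidUnit hn g * braidUnit hn g * m = m * braidUnit hn g * braidUnit hn g) :
    Commute m (g • m) := by
  refine (Units.mul_left_inj (braidUnit hn g * braidUnit hn g)).1 ?_
  calc m * g • m * ↑(braidUnit hn g * braidUnit hn g)
      = m * braidUnit hn g * m * braidUnit hn g := by
        rw [Units.val_mul, ← mul_assoc, mul_assoc m, ← braidUnit_mul, ← mul_assoc]
    _ = g • m * (braidUnit hn g * braidUnit hn g * m) := by
        rw [h₁, braidUnit_mul, mul_assoc, mul_assoc, mul_assoc]
    _ = g • m * m * ↑(braidUnit hn g * braidUnit hn g) := by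
        simp only [h₂, Units.val_mul, mul_assoc]

variable (hn) in
/-- The generators `θ_k` of the tied monoid as a sequence, with junk value `1` for `n ≤ k`. -/
def tieGen (k : ℕ) : TiedMonoidB n hn :=
  if hk : k < n then PresentedMonoid.of _ (.θ ⟨k, hk⟩) else 1

theorem tieGen_of_lt {k : ℕ} (hk : k < n) :
    tieGen hn k = PresentedMonoid.of _ (.θ ⟨k, hk⟩) :=
  dif_pos hk

theorem braidUnit_braidGen {k : ℕ} (hk : k < n) :
    (braidUnit hn (braidGen hn k) : TiedMonoidB n hn) = PresentedMonoid.of _ (.s ⟨k, hk⟩) := by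
  rw [braidGen_of_lt, braidUnit_of]
  rfl

theorem braidUnit_inv_braidGen {k : ℕ} (hk : k < n) :
    ((braidUnit hn (braidGen hn k))⁻¹ : (TiedMonoidB n hn)ˣ) =
      PresentedMonoid.of (TBRel n hn) (.s' ⟨k, hk⟩) := by
  rw [braidGen_of_lt, braidUnit_of]
  rfl

theorem one_zero_one_smul_tieGen :
    braidGen hn 1 • braidGen hn 0 • braidGen hn 1 • tieGen hn 0 = tieGen hn 0 := by
  simp only [← mul_smul, smul_eq_iff, map_mul, Units.val_mul,
    braidUnit_braidGen (show 0 < n by omega), braidUnit_braidGen (show 1 < n by omega),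
    tieGen_of_lt (show 0 < n by omega), ← mul_assoc]
  exact (mk_eq_mk .TB3a).symm

theorem zero_one_zero_smul_tieGen :
    braidGen hn 0 • braidGen hn 1 • braidGen hn 0 • tieGen hn 1 = tieGen hn 1 := by
  simp only [← mul_smul, smul_eq_iff, map_mul, Units.val_mul,
    braidUnit_braidGen (show 0 < n by omega), braidUnit_braidGen (show 1 < n by omega),
    tieGen_of_lt (show 1 < n by omega), ← mul_assoc]
  exact (mk_eq_mk .TB3b).symm

theorem tieGen_mul_tieGen {i j : ℕ} (hi : i < n) (hj : j < n) (hij : i + 1 = j ∨ j + 1 = i) :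
    tieGen hn i * tieGen hn j = tieGen hn j * braidGen hn i • tieGen hn j := by
  refine (Units.mul_left_inj (braidUnit hn (braidGen hn i))).1 ?_
  rw [mul_assoc (tieGen hn j), ← braidUnit_mul, braidUnit_braidGen hi, tieGen_of_lt hi,
    tieGen_of_lt hj, ← mul_assoc]
  exact mk_eq_mk (.TB6a _ _ hij)

theorem isTieSystem_tieGen : IsTieSystem (braidGen hn) (tieGen hn) n where
  toIsBraidSeqB := isBraidSeqB_braidGen
  two_le := hn
  tie_mul_self hi := by
    rw [tieGen_of_lt hi]
    exact mk_eq_mk (.TB1 _)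
  tie_commute hi hj := by
    rw [tieGen_of_lt hi, tieGen_of_lt hj]
    exact mk_eq_mk (.TB2 _ _)
  one_zero_one_smul := one_zero_one_smul_tieGen
  zero_one_zero_smul := zero_one_zero_smul_tieGen
  smul_smul_tie hi hj hin hjn hij := by
    rw [smul_smul_eq_iff, braidUnit_braidGen hin, braidUnit_braidGen hjn, tieGen_of_lt hin,
      tieGen_of_lt hjn]
    exact mk_eq_mk (.TB4 _ _ hi hj hij)
  smul_tie hi hj hij := by
    rw [smul_eq_iff, braidUnit_braidGen hi, tieGen_of_lt hj]
    exact mk_eq_mk (.TB5 _ _ hij)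
  tie_mul_tie := tieGen_mul_tieGen
  commute_zero_smul := by
    refine commute_smul ?_ ?_ <;> rw [braidUnit_braidGen (by omega), tieGen_of_lt (by omega)]
    exacts [mk_eq_mk .TB7a, mk_eq_mk .TB8b]
  commute_one_smul := by
    refine commute_smul ?_ ?_ <;> rw [braidUnit_braidGen (by omega), tieGen_of_lt (by omega)]
    exacts [mk_eq_mk .TB7b, mk_eq_mk .TB8a]
  one_one_smul := by
    rw [smul_smul_eq_iff, braidUnit_braidGen (by omega), tieGen_of_lt (by omega)]
    exact mk_eq_mk .TB8a
  zero_zero_smul := by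
    rw [smul_smul_eq_iff, braidUnit_braidGen (by omega), tieGen_of_lt (by omega)]
    exact mk_eq_mk .TB8b
  smul_inv_smul_tie hi hj hin hjn hij := by
    rw [smul_smul_eq_iff, map_inv, braidUnit_braidGen hin, braidUnit_inv_braidGen hjn,
      tieGen_of_lt hin, tieGen_of_lt hjn]
    exact mk_eq_mk (.TB9 _ _ hi hj hij)

end TiedMonoidB

/-- The left end of the tie `θ_k`: `-1` for `k = 0`, and `k` for `k ≥ 1`. -/
def tieLeft (k : ℕ) : ℤ := if k = 0 then -1 else k

theorem tieLeft_of_pos {k : ℕ} (hk : 1 ≤ k) : tieLeft k = k := if_neg (by omega)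

theorem tieLeft_cases (k : ℕ) : (k = 0 ∧ tieLeft k = -1) ∨ (1 ≤ k ∧ tieLeft k = k) := by
  rw [tieLeft]
  split_ifs <;> omega

theorem tieLeft_mem {n k : ℕ} (hk : k < n) : tieLeft k ≠ 0 ∧ |tieLeft k| ≤ (n : ℤ) := by
  have := tieLeft_cases k
  rw [abs_le]
  omega

theorem simpleReflection_tieLeft (k : ℕ) : simpleReflection k (tieLeft k) = k + 1 := by
  have := tieLeft_cases k
  have := simpleReflection_cases k (tieLeft k)
  omega

theorem simpleReflection_add_one (k : ℕ) : simpleReflection k (k + 1) = tieLeft k := by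
  rw [← simpleReflection_tieLeft, simpleReflection_involutive]

theorem simpleReflection_tieLeft_of_ne {i j : ℕ} (h : i ≠ j) (hij : ¬(i + 1 = j ∨ j + 1 = i)) :
    simpleReflection i (tieLeft j) = tieLeft j := by
  have := tieLeft_cases j
  have := simpleReflection_cases i (tieLeft j)
  omega

theorem simpleReflection_add_one_of_ne {i j : ℕ} (h : i ≠ j) (hij : j + 1 ≠ i) :
    simpleReflection i (j + 1) = j + 1 := by
  have := simpleReflection_cases i (j + 1)
  omega

section JoinTie

open BPartition

variable {n : ℕ}

variable (n) in
/-- The `B_n`-partition `ε_{-1,1}` for `k = 0`, and `ε_{k,k+1}` for `k ≥ 1`, with junk value `⊥` for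
`n ≤ k`. -/
noncomputable def joinTie (k : ℕ) : BPartition n :=
  if hk : k < n then join ⟨tieLeft k, tieLeft_mem hk⟩ (pmB ⟨k, hk⟩) else ⊥

theorem joinTie_of_lt {k : ℕ} (hk : k < n) :
    joinTie n k = join ⟨tieLeft k, tieLeft_mem hk⟩ (pmB ⟨k, hk⟩) :=
  dif_pos hk

theorem join_congr {x y x' y' : PM n} (hx : (x : ℤ) = x') (hy : (y : ℤ) = y') :
    join x y = join x' y' :=
  congr_arg₂ join (Subtype.ext hx) (Subtype.ext hy)

variable {hn : 2 ≤ n}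

theorem braidGen_inv_smul {k : ℕ} (hk : k < n) (x : PM n) :
    (braidGen hn k)⁻¹ • x = braidGen hn k • x :=
  inv_smul_eq_iff.2 <| Subtype.ext <| by
    rw [coe_braidGen_smul hk, coe_braidGen_smul hk, simpleReflection_involutive]

theorem braidGen_inv_smul_joinTie {j k : ℕ} (hk : k < n) :
    (braidGen hn k)⁻¹ • joinTie n j = braidGen hn k • joinTie n j := by
  rw [joinTie]
  split_ifs
  · rw [braid_smul_join, braid_smul_join, braidGen_inv_smul hk, braidGen_inv_smul hk]
  · exact (smul_one _).trans (smul_one _).symm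

theorem smul_smul_joinTie {i j : ℕ} (hi : 1 ≤ i) (hj : 1 ≤ j) (hin : i < n) (hjn : j < n)
    (hij : i + 1 = j ∨ j + 1 = i) :
    braidGen hn i • braidGen hn j • joinTie n i = joinTie n j := by
  rw [joinTie_of_lt hin, joinTie_of_lt hjn, braid_smul_join, braid_smul_join]
  refine join_congr ?_ ?_ <;>
    simp only [coe_braidGen_smul hin, coe_braidGen_smul hjn, tieLeft_of_pos hi,
      tieLeft_of_pos hj, pmB]
  · have h₁ := simpleReflection_cases j i
    have h₂ := simpleReflection_cases i (simpleReflection j i)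
    omega
  · have h₁ := simpleReflection_cases j (i + 1)
    have h₂ := simpleReflection_cases i (simpleReflection j (i + 1))
    omega

theorem smul_joinTie {i j : ℕ} (hi : i < n) (hj : j < n) (hij : ¬(i + 1 = j ∨ j + 1 = i)) :
    braidGen hn i • joinTie n j = joinTie n j := by
  rw [joinTie_of_lt hj, braid_smul_join]
  by_cases h : i = j
  · subst h
    rw [join_comm]
    refine join_congr ?_ ?_ <;> rw [coe_braidGen_smul hi]
    exacts [simpleReflection_add_one i, simpleReflection_tieLeft i]
  · refine join_congr ?_ ?_ <;> rw [coe_braidGen_smul hi]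
    exacts [simpleReflection_tieLeft_of_ne h hij,
      simpleReflection_add_one_of_ne h (not_or.1 hij).2]

theorem joinTie_mul_joinTie_succ {i : ℕ} (hi : i + 1 < n) :
    joinTie n i * joinTie n (i + 1) = joinTie n (i + 1) * braidGen hn i • joinTie n (i + 1) := by
  have hi' : i < n := by omega
  have tie_succ : joinTie n (i + 1) = join (pmB ⟨i, hi'⟩) (pmB ⟨i + 1, hi⟩) := by
    rw [joinTie_of_lt hi]
    exact join_congr (tieLeft_of_pos (Nat.le_add_left 1 i)) rfl
  have smul_tie_succ : braidGen hn i • joinTie n (i + 1) =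
      join ⟨tieLeft i, tieLeft_mem hi'⟩ (pmB ⟨i + 1, hi⟩) := by
    rw [tie_succ, braid_smul_join]
    refine join_congr ?_ ?_ <;> rw [coe_braidGen_smul hi']
    exacts [simpleReflection_add_one i,
      simpleReflection_add_one_of_ne (j := i + 1) (by omega) (by omega)]
  rw [smul_tie_succ, tie_succ, joinTie_of_lt hi']
  exact join_sup_join _ _ _

theorem joinTie_succ_mul_joinTie {j : ℕ} (hj : 1 ≤ j) (hjn : j + 1 < n) :
    joinTie n (j + 1) * joinTie n j = joinTie n j * braidGen hn (j + 1) • joinTie n j := by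
  have hj' : j < n := by omega
  have tie_succ : joinTie n (j + 1) = join (pmB ⟨j + 1, hjn⟩) (pmB ⟨j, hj'⟩) := by
    rw [joinTie_of_lt hjn, join_comm]
    exact join_congr rfl (tieLeft_of_pos (Nat.le_add_left 1 j))
  have tie : joinTie n j = join (pmB ⟨j, hj'⟩) ⟨tieLeft j, tieLeft_mem hj'⟩ := by
    rw [joinTie_of_lt hj', join_comm]
  have smul_tie : braidGen hn (j + 1) • joinTie n j =
      join (pmB ⟨j + 1, hjn⟩) ⟨tieLeft j, tieLeft_mem hj'⟩ := by
    rw [tie, braid_smul_join]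
    have h₁ := simpleReflection_cases (j + 1) (j + 1)
    have h₂ := simpleReflection_cases (j + 1) (tieLeft j)
    have := tieLeft_of_pos hj
    refine join_congr ?_ ?_ <;> rw [coe_braidGen_smul hjn] <;> simp only [pmB] <;> omega
  rw [smul_tie, tie_succ, tie]
  exact join_sup_join _ _ _

theorem joinTie_one_mul_joinTie_zero :
    joinTie n 1 * joinTie n 0 = joinTie n 0 * braidGen hn 1 • joinTie n 0 := by
  have h₀ : 0 < n := by omega
  have h₁ : 1 < n := by omega
  have tie_one : joinTie n 1 = join (pmB ⟨0, h₀⟩) (pmB ⟨1, h₁⟩) := joinTie_of_lt h₁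
  have tie_zero : joinTie n 0 = join (pmB ⟨0, h₀⟩).neg (pmB ⟨0, h₀⟩) := joinTie_of_lt h₀
  have smul_tie_zero :
      braidGen hn 1 • joinTie n 0 = join (pmB ⟨1, h₁⟩).neg (pmB ⟨1, h₁⟩) := by
    rw [tie_zero, braid_smul_join]
    refine join_congr ?_ ?_ <;> rw [coe_braidGen_smul h₁] <;> rfl
  rw [smul_tie_zero, tie_one, tie_zero]
  exact join_sup_join_neg _ _

theorem joinTie_mul_joinTie {i j : ℕ} (hi : i < n) (hj : j < n) (hij : i + 1 = j ∨ j + 1 = i) :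
    joinTie n i * joinTie n j = joinTie n j * braidGen hn i • joinTie n j := by
  rcases hij with rfl | rfl
  · exact joinTie_mul_joinTie_succ hj
  · obtain rfl | h := Nat.eq_zero_or_pos j
    exacts [joinTie_one_mul_joinTie_zero, joinTie_succ_mul_joinTie h hi]

theorem isTieSystem_joinTie : IsTieSystem (braidGen hn) (joinTie n) n where
  toIsBraidSeqB := isBraidSeqB_braidGen
  two_le := hn
  tie_mul_self _ := sup_idem _
  tie_commute _ _ := Commute.all _ _
  one_zero_one_smul := by
    simp only [joinTie_of_lt (show 0 < n by omega), braid_smul_join]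
    refine join_congr ?_ ?_ <;>
      simp only [coe_braidGen_smul (show 0 < n by omega), coe_braidGen_smul (show 1 < n by omega),
        pmB] <;> decide
  zero_one_zero_smul := by
    simp only [joinTie_of_lt (show 1 < n by omega), braid_smul_join]
    rw [← join_neg, join_comm]
    refine join_congr ?_ ?_ <;>
      simp only [coe_braidGen_smul (show 0 < n by omega), coe_braidGen_smul (show 1 < n by omega),
        pmB, PM.coe_neg] <;> decide
  smul_smul_tie := smul_smul_joinTie
  smul_tie := smul_joinTie
  tie_mul_tie := joinTie_mul_joinTie
  commute_zero_smul := Commute.all _ _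
  commute_one_smul := Commute.all _ _
  one_one_smul := by
    rw [← braidGen_inv_smul_joinTie (by omega), smul_inv_smul]
  zero_zero_smul := by
    rw [← braidGen_inv_smul_joinTie (by omega), smul_inv_smul]
  smul_inv_smul_tie hi hj hin hjn hij := by
    rw [braidGen_inv_smul_joinTie hjn, smul_smul_joinTie hi hj hin hjn hij]

end JoinTie

theorem IsTieSystem.braidTie_tieLeft {n : ℕ} {hn : 2 ≤ n} {M : Type*} [Monoid M]
    [MulDistribMulAction (BraidGroupB n hn) M] {θ : ℕ → M} (h : IsTieSystem (braidGen hn) θ n)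
    {k : ℕ} (hk : k < n) :
    braidTie hn θ ⟨tieLeft k, tieLeft_mem hk⟩ (pmB ⟨k, hk⟩) = θ k := by
  obtain ⟨rfl, _⟩ | ⟨hk', hleft⟩ := tieLeft_cases k
  · exact h.pairTie_neg_one_one
  · simp only [braidTie, hleft, pmB]
    exact h.pairTie_eq_tie hk' hk

section SemidirectGen

open MonoidSemidirect

variable {n : ℕ} {hn : 2 ≤ n}

theorem braidGen_coe (i : Fin n) : braidGen hn i = PresentedGroup.of i := braidGen_of_lt i.2

theorem braidGen_mul_mul {i j : Fin n} (hi : 1 ≤ i.1) (hj : 1 ≤ j.1) (hij : adjIdx i j) :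
    braidGen hn i * braidGen hn j * braidGen hn i =
      braidGen hn j * braidGen hn i * braidGen hn j := by
  rw [braidGen_coe, braidGen_coe]
  exact PresentedGroup.mk_eq_mk_of_mul_inv_mem (BBRelator.bb2 i j hi hj hij)

theorem braidGen_mul_comm {i j : Fin n} (hij : farIdx i j) :
    braidGen hn i * braidGen hn j = braidGen hn j * braidGen hn i := by
  rw [braidGen_coe, braidGen_coe]
  exact PresentedGroup.mk_eq_mk_of_mul_inv_mem (BBRelator.bb3 i j hij)

variable (hn) in
/-- The image in `M ⋊ BraidGroupB n hn` of a generator of the tied monoid, for ties `θ` in `M`. -/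
def semidirectGen {M : Type*} [Monoid M] [MulDistribMulAction (BraidGroupB n hn) M] (θ : ℕ → M) :
    TBGen n → MonoidSemidirect M (BraidGroupB n hn)
  | .s i => inr (braidGen hn i)
  | .s' i => inr (braidGen hn i)⁻¹
  | .θ i => inl (θ i)

end SemidirectGen

namespace IsTieSystem

open MonoidSemidirect

variable {n : ℕ} {hn : 2 ≤ n} {M : Type*} [CommMonoid M]
  [MulDistribMulAction (BraidGroupB n hn) M] {θ : ℕ → M}
  (h : IsTieSystem (braidGen hn) θ n)
include h

theorem smul_smul_tie_self {i j : ℕ} (hi : i < n) (hj : j < n) (hij : i + 1 = j ∨ j + 1 = i) :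
    braidGen hn i • braidGen hn i • θ j = θ j := by
  rcases hij with rfl | rfl
  · obtain rfl | hi' := Nat.eq_zero_or_pos i
    exacts [h.zero_zero_smul, h.smul_smul_self hi' (by omega) hi hj (Or.inl rfl)]
  · obtain rfl | hj' := Nat.eq_zero_or_pos j
    exacts [h.one_one_smul, h.smul_smul_self (by omega) hj' hi hj (Or.inr rfl)]

theorem tie_mul_smul_tie {i j : ℕ} (hi : i < n) (hj : j < n) (hij : i + 1 = j ∨ j + 1 = i) :
    θ j * braidGen hn i • θ j = braidGen hn i • θ i * braidGen hn i • θ j := by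
  rw [← smul_mul', h.tie_mul_tie hi hj hij, smul_mul', h.smul_smul_tie_self hi hj hij, mul_comm]

theorem lift_semidirectGen_eq {a b : FreeMonoid (TBGen n)} (hab : TBRel n hn a b) :
    FreeMonoid.lift (semidirectGen hn θ) a = FreeMonoid.lift (semidirectGen hn θ) b := by
  cases hab <;> simp only [map_mul, map_one, FreeMonoid.lift_eval_of, semidirectGen] <;>
  refine MonoidSemidirect.ext ?_ ?_ <;>
  simp only [mul_left, mul_right, inl_left, inl_right, inr_left, inr_right, one_left, one_right,
    mul_one, one_mul, smul_one, one_smul, mul_smul, mul_inv_cancel, inv_mul_cancel]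
  case BB1.refine_2 => exact isBraidSeqB_braidGen.braid_four
  case BB2.refine_2 i j hi hj hij => exact braidGen_mul_mul hi hj hij
  case BB3.refine_2 i j hij => exact braidGen_mul_comm hij
  case TB1.refine_1 i => exact h.tie_mul_self i.2
  case TB2.refine_1 i j => exact mul_comm _ _
  case TB3a.refine_1 => exact h.one_zero_one_smul.symm
  case TB3b.refine_1 => exact h.zero_one_zero_smul.symm
  case TB4.refine_1 i j hi hj hij => exact h.smul_smul_tie hi hj i.2 j.2 hij
  case TB5.refine_1 i j hij => exact h.smul_tie i.2 j.2 hij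
  case TB6a.refine_1 i j hij => exact h.tie_mul_tie i.2 j.2 hij
  case TB6b.refine_1 i j hij => exact h.tie_mul_smul_tie i.2 j.2 hij
  case TB7a.refine_1 => rw [h.zero_zero_smul, mul_comm]
  case TB7b.refine_1 => rw [h.one_one_smul, mul_comm]
  case TB8a.refine_1 => exact h.one_one_smul
  case TB8b.refine_1 => exact h.zero_zero_smul
  case TB9.refine_1 i j hi hj hij => exact h.smul_inv_smul_tie hi hj i.2 j.2 hij

end IsTieSystem

namespace TiedMonoidB

open BPartition MonoidSemidirect

variable {n : ℕ} {hn : 2 ≤ n}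

variable (hn) in
/-- The homomorphism from the tied monoid to `P_n^B ⋊ B_n^B` given on the generators. -/
noncomputable def toSemidirect :
    TiedMonoidB n hn →* MonoidSemidirect (BPartition n) (BraidGroupB n hn) :=
  PresentedMonoid.lift (semidirectGen hn (joinTie n)) fun _ _ =>
    isTieSystem_joinTie.lift_semidirectGen_eq

theorem toSemidirect_s (i : Fin n) :
    toSemidirect hn (PresentedMonoid.of _ (.s i)) = inr (PresentedGroup.of i) :=
  congrArg inr (braidGen_coe i)

theorem toSemidirect_s' (i : Fin n) :
    toSemidirect hn (PresentedMonoid.of _ (.s' i)) = inr (PresentedGroup.of i)⁻¹ :=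
  congrArg (fun g => inr g⁻¹) (braidGen_coe i)

theorem toSemidirect_θ (i : Fin n) :
    toSemidirect hn (PresentedMonoid.of _ (.θ i)) =
      inl (join ⟨tieLeft i, tieLeft_mem i.2⟩ (pmB i)) :=
  congrArg inl (joinTie_of_lt i.2)

theorem toSemidirect_braidUnit (g : BraidGroupB n hn) :
    toSemidirect hn (braidUnit hn g) = inr g := by
  have hom_eq : (Units.map (toSemidirect hn)).comp (braidUnit hn) = MonoidHom.toHomUnits inr :=
    PresentedGroup.ext fun i => Units.ext <| by
      rw [MonoidHom.comp_apply, braidUnit_of, Units.coe_map]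
      exact toSemidirect_s i
  exact congrArg Units.val (DFunLike.congr_fun hom_eq g)

theorem toSemidirect_smul (g : BraidGroupB n hn) {t : TiedMonoidB n hn} {m : BPartition n}
    (ht : toSemidirect hn t = inl m) : toSemidirect hn (g • t) = inl (g • m) := by
  rw [smul_def, map_mul, map_mul, ht, ← map_inv, toSemidirect_braidUnit, toSemidirect_braidUnit,
    inr_mul_inl, mul_assoc, ← map_mul, mul_inv_cancel, map_one, mul_one]

theorem toSemidirect_braidTie_of_coe {k : ℕ} (hk : k < n) {x y : PM n} (hx : (x : ℤ) = tieLeft k)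
    (hy : (y : ℤ) = k + 1) :
    toSemidirect hn (braidTie hn (tieGen hn) x y) = inl (join x y) := by
  obtain rfl : x = ⟨tieLeft k, tieLeft_mem hk⟩ := Subtype.ext hx
  obtain rfl : y = pmB ⟨k, hk⟩ := Subtype.ext hy
  rw [isTieSystem_tieGen.braidTie_tieLeft hk, tieGen_of_lt hk, toSemidirect_θ]

theorem toSemidirect_braidTie_of_smul {x y : PM n} (g : BraidGroupB n hn)
    (h : toSemidirect hn (braidTie hn (tieGen hn) (g • x) (g • y)) = inl (join (g • x) (g • y))) :
    toSemidirect hn (braidTie hn (tieGen hn) x y) = inl (join x y) := by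
  simpa only [isTieSystem_tieGen.smul_braidTie, braid_smul_join, inv_smul_smul] using
    toSemidirect_smul g⁻¹ h

theorem toSemidirect_braidTie (x y : PM n) :
    toSemidirect hn (braidTie hn (tieGen hn) x y) = inl (join x y) := by
  by_cases hxy : (x : ℤ).natAbs = (y : ℤ).natAbs
  · obtain rfl | rfl := PM.eq_or_eq_neg hxy
    · rw [braidTie_self, join_self, map_one, ← one_eq_bot, map_one]
    · obtain ⟨g, hg⟩ := exists_smul_eq_one (hn := hn) x.neg
      refine toSemidirect_braidTie_of_smul g
        (toSemidirect_braidTie_of_coe (k := 0) (by omega) ?_ hg)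
      rw [braid_smul_neg, PM.coe_neg] at hg
      exact (neg_eq_iff_eq_neg.1 hg).trans rfl
  · obtain ⟨g, hx, hy⟩ := exists_smul_eq_one_two (hn := hn) hxy
    exact toSemidirect_braidTie_of_smul g (toSemidirect_braidTie_of_coe (k := 1) (by omega) hx hy)

variable (hn) in
/-- The inverse of `toSemidirect`. -/
noncomputable def ofSemidirect :
    MonoidSemidirect (BPartition n) (BraidGroupB n hn) →* TiedMonoidB n hn :=
  MonoidSemidirect.lift (isTieSystem_tieGen (hn := hn)).isPairSystem_braidTie.lift
    ((Units.coeHom _).comp (braidUnit hn)) fun g m => by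
      rw [← isTieSystem_tieGen.smul_lift]
      exact braidUnit_mul g _

theorem ofSemidirect_comp_toSemidirect :
    (ofSemidirect hn).comp (toSemidirect hn) = MonoidHom.id _ := by
  refine PresentedMonoid.ext _ fun x => ?_
  rw [MonoidHom.comp_apply, ofSemidirect, MonoidHom.id_apply]
  rcases x with i | i | i
  · rw [toSemidirect_s, lift_inr, MonoidHom.comp_apply, braidUnit_of]
    rfl
  · rw [toSemidirect_s', lift_inr, MonoidHom.comp_apply, map_inv, braidUnit_of]
    rfl
  · rw [toSemidirect_θ, lift_inl, IsPairSystem.lift_join]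
    exact (isTieSystem_tieGen.braidTie_tieLeft i.2).trans (tieGen_of_lt i.2)

theorem toSemidirect_comp_ofSemidirect :
    (toSemidirect hn).comp (ofSemidirect hn) = MonoidHom.id _ := by
  refine MonoidSemidirect.hom_ext (BPartition.hom_ext fun x y => ?_) (MonoidHom.ext fun g => ?_)
  · refine Eq.trans ?_ (toSemidirect_braidTie x y)
    simp only [MonoidHom.comp_apply, ofSemidirect, lift_inl, IsPairSystem.lift_join]
  · refine Eq.trans ?_ (toSemidirect_braidUnit g)
    simp only [MonoidHom.comp_apply, ofSemidirect, lift_inr, Units.coeHom_apply]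

variable (hn) in
/-- The tied monoid of type `B` is the semidirect product `P_n^B ⋊ B_n^B`. -/
noncomputable def mulEquivSemidirect :
    TiedMonoidB n hn ≃* MonoidSemidirect (BPartition n) (BraidGroupB n hn) :=
  MonoidHom.toMulEquiv (toSemidirect hn) (ofSemidirect hn) ofSemidirect_comp_toSemidirect
    toSemidirect_comp_ofSemidirect

end TiedMonoidB

theorem BPartition.isLeast_coe_mul {n : ℕ} (I J : BPartition n) :
    IsLeast {K | IsBPart K ∧ I.1 ≤ K ∧ J.1 ≤ K} (I * J).1 :=
  ⟨⟨(I * J).2, (le_sup_left : I ≤ I ⊔ J), (le_sup_right : J ≤ I ⊔ J)⟩,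
    fun K hK => (sup_le hK.2.1 hK.2.2 : I ⊔ J ≤ ⟨K, hK.1⟩)⟩

namespace TiedMonoidB

variable {n : ℕ} {hn : 2 ≤ n}

variable (hn) in
/-- The pair formed by the partition and the braid of an element of the tied monoid. -/
noncomputable def partitionBraid (x : TiedMonoidB n hn) : Setoid (PM n) × BraidGroupB n hn :=
  ((toSemidirect hn x).left.1, (toSemidirect hn x).right)

theorem partitionBraid_injective : Function.Injective (partitionBraid hn) := fun _ _ h =>
  (mulEquivSemidirect hn).injective <|
    MonoidSemidirect.ext (Subtype.ext (congrArg Prod.fst h)) (congrArg Prod.snd h)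

theorem range_partitionBraid : Set.range (partitionBraid hn) = {p | IsBPart p.1} := by
  refine Set.Subset.antisymm (Set.range_subset_iff.2 fun x => (toSemidirect hn x).left.2)
    fun ⟨I, g⟩ hI => ?_
  obtain ⟨x, hx⟩ := (mulEquivSemidirect hn).surjective ⟨⟨I, hI⟩, g⟩
  exact ⟨x, congrArg (fun p => (p.left.1, p.right)) hx⟩

theorem partitionBraid_of_inr {x : TiedMonoidB n hn} {g : BraidGroupB n hn}
    (hx : toSemidirect hn x = .inr g) : partitionBraid hn x = (⊥, g) := by
  rw [partitionBraid, hx]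
  exact Prod.ext BPartition.coe_bot rfl

theorem partitionBraid_θ (i : Fin n) {x y : PM n} (hx : (x : ℤ) = tieLeft i)
    (hy : (y : ℤ) = i + 1) :
    partitionBraid hn (PresentedMonoid.of _ (.θ i)) = (eps x y, 1) := by
  have hxy : x ≠ y := fun h => by
    have := tieLeft_cases i
    have := congrArg Subtype.val h
    omega
  rw [partitionBraid, toSemidirect_θ, ← BPartition.coe_join hxy,
    join_congr (x' := ⟨tieLeft i, tieLeft_mem i.2⟩) (y' := pmB i) hx hy]
  rfl

end TiedMonoidB

/-- The tied monoid of type B, presented by (BB0)–(BB3) and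
(TB1)–(TB9), is the semidirect product `Pₙᴮ ⋊ Bₙᴮ`: for the homomorphism
`π : Bₙᴮ → Perm [±n]` with `π(σ₀)` the transposition `(-1, 1)` and `π(σᵢ)` (for `i ≥ 1`)
the double transposition swapping `i, i+1` and `-i, -(i+1)`, there is a bijection
`F : TB → Pₙᴮ × Bₙᴮ` with `F(1) = (⊥, 1)`, `F(sᵢ) = (⊥, σᵢ)`, `F(sᵢ') = (⊥, σᵢ⁻¹)`,
`F(θ₀) = (ε_{-1,1}, 1)`, `F(θᵢ) = (ε_{i,i+1}, 1)` for `i ≥ 1`, and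
`F(x·y) = (F(x)₁ ·_B (π(F(x)₂) • F(y)₁), F(x)₂ · F(y)₂)`, where `·_B` is the
least-upper-bound product on `Pₙᴮ`. -/
theorem tiedMonoidTypeB_semidirect (n : ℕ) (hn : 2 ≤ n)
    (π : BraidGroupB n hn →* Equiv.Perm (PM n))
    (hπ0 : π (PresentedGroup.of ⟨0, by omega⟩) =
      Equiv.swap (PM.neg (pmOne n hn)) (pmOne n hn))
    (hπ : ∀ i : Fin n, ∀ hi : 1 ≤ i.1,
      π (PresentedGroup.of i) =
        Equiv.swap (pmA i hi) (pmB i) *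
          Equiv.swap (PM.neg (pmA i hi)) (PM.neg (pmB i))) :
    ∃ F : PresentedMonoid (TBRel n hn) → Setoid (PM n) × BraidGroupB n hn,
      Function.Injective F ∧
      Set.range F = {p | IsBPart p.1} ∧
      F 1 = (⊥, 1) ∧
      (∀ i : Fin n,
        F (PresentedMonoid.of (TBRel n hn) (TBGen.s i)) = (⊥, PresentedGroup.of i)) ∧
      (∀ i : Fin n,
        F (PresentedMonoid.of (TBRel n hn) (TBGen.s' i)) =
          (⊥, (PresentedGroup.of i)⁻¹)) ∧
      F (PresentedMonoid.of (TBRel n hn) (TBGen.θ ⟨0, by omega⟩)) =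
        (eps (PM.neg (pmOne n hn)) (pmOne n hn), 1) ∧
      (∀ i : Fin n, ∀ hi : 1 ≤ i.1,
        F (PresentedMonoid.of (TBRel n hn) (TBGen.θ i)) = (eps (pmA i hi) (pmB i), 1)) ∧
      ∀ x y : PresentedMonoid (TBRel n hn),
        (F (x * y)).2 = (F x).2 * (F y).2 ∧
        IsLeast {K | IsBPart K ∧ (F x).1 ≤ K ∧ permAct (π ((F x).2)) ((F y).1) ≤ K}
          ((F (x * y)).1) := by
  refine ⟨TiedMonoidB.partitionBraid hn, TiedMonoidB.partitionBraid_injective,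
    TiedMonoidB.range_partitionBraid, ?_, fun i => ?_, fun i => ?_, ?_, fun i hi => ?_,
    fun x y => ?_⟩
  · exact TiedMonoidB.partitionBraid_of_inr (map_one _)
  · exact TiedMonoidB.partitionBraid_of_inr (TiedMonoidB.toSemidirect_s i)
  · exact TiedMonoidB.partitionBraid_of_inr (TiedMonoidB.toSemidirect_s' i)
  · exact TiedMonoidB.partitionBraid_θ ⟨0, by omega⟩ rfl rfl
  · exact TiedMonoidB.partitionBraid_θ i (tieLeft_of_pos hi).symm rfl
  · rw [TiedMonoidB.partitionBraid, map_mul]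
    refine ⟨rfl, ?_⟩
    rw [TiedMonoidB.partitionBraid, TiedMonoidB.partitionBraid, ← coe_braid_smul π hπ0 hπ]
    exact BPartition.isLeast_coe_mul _ _
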